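/- Let f: ℝ^{n×n} → ℝ be real analytic. Then every Q ∈ O(n) satisfies a Łojasiewicz inequality for the projected gradient: there exist δ > 0, σ > 0 and ζ ∈ (0, 1/2] such that for all Q' ∈ O(n) with ‖Q' − Q‖ < δ, it holds that |f(Q') − f(Q)|^{1−ζ} ≤ σ ‖ProjGrad f(Q')‖. -/

import Mathlib

open Matrix BigOperators Filter

/-- Frobenius norm of a real matrix. -/
noncomputable def frobR {n : ℕ} (A : Matrix (Fin n) (Fin n) ℝ) : ℝ :=
  Real.sqrt (∑ i, ∑ j, (A i j) ^ 2)

/-- `g` is the Euclidean gradient of `f : ℝ^{n×n} → ℝ`: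
the derivative of `f` at `Q` in direction `H` equals `⟨g Q, H⟩ = ∑ᵢⱼ (g Q)ᵢⱼ Hᵢⱼ`. -/
def IsGradR {n : ℕ} (f : Matrix (Fin n) (Fin n) ℝ → ℝ)
    (g : Matrix (Fin n) (Fin n) ℝ → Matrix (Fin n) (Fin n) ℝ) : Prop :=
  ∀ Q H, HasDerivAt (fun t : ℝ => f (Q + t • H)) (∑ i, ∑ j, g Q i j * H i j) 0

/-- Riemannian (projected) gradient on O(n): `Q (Λ - Λᵀ)/2` with `Λ = Qᵀ ∇f(Q)`. -/
noncomputable def projGradR {n : ℕ}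
    (g : Matrix (Fin n) (Fin n) ℝ → Matrix (Fin n) (Fin n) ℝ)
    (Q : Matrix (Fin n) (Fin n) ℝ) : Matrix (Fin n) (Fin n) ℝ :=
  Q * ((1 / 2 : ℝ) • (Qᵀ * g Q - (Qᵀ * g Q)ᵀ))

/-!
For a function on `ℝᵐ` that is analytic at `p`, the Łojasiewicz gradient inequality
`|F x - F p| ^ (1 - ζ) ≤ C * ‖fderiv ℝ F x‖` is immediate, by Euler's identity, when `F - F p` is a
monomial times a nonvanishing function. The general case reduces to this one along every
ultrafilter `U ≤ 𝓝 p`: a chain of analytic charts through which `U` lifts makes `F - F p` such a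
product. The charts come from an induction on the dimension and on the order of `F - F p` in the
first variable: implicit functions and a Tschirnhaus translation kill the subleading coefficient,
the remaining coefficients are monomialized by the induction on dimension, and blow-ups then lower
the order. An ultrafilter selects a single chart of each blow-up, so no global resolution is
needed; and as any sequence of increasingly weak inequalities one of which holds along each such
ultrafilter contains one that holds near `p`, the inequality follows.

On the orthogonal group, the inequality is applied to `f ∘ ρ` with
`ρ X = (3 X - X Xᵀ X) / 2`, which fixes orthogonal matrices and whose derivative at such a matrix
projects onto the tangent space, so that the gradient of `f ∘ ρ` there is the projected gradient
of `f`.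
-/

namespace Lojasiewicz

open Topology Set

section Germs

variable {E : Type*} [NormedAddCommGroup E] [NormedSpace ℝ E] {p : E}

theorem frequently_mul_ne_zero {f g : E → ℝ} (hf : AnalyticAt ℝ f p) (hg : AnalyticAt ℝ g p)
    (hf0 : ∃ᶠ x in 𝓝 p, f x ≠ 0) (hg0 : ∃ᶠ x in 𝓝 p, g x ≠ 0) :
    ∃ᶠ x in 𝓝 p, f x * g x ≠ 0 := by
  intro hfg
  simp only [not_not] at hfg
  obtain ⟨r, hr, hball⟩ := Metric.eventually_nhds_iff_ball.1
    ((hf.eventually_analyticAt.and hg.eventually_analyticAt).and hfg)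
  obtain ⟨q, hfq, hq⟩ := (hf0.and_eventually (Metric.ball_mem_nhds p hr)).exists
  have hg_near_q : ∀ᶠ x in 𝓝 q, g x = 0 := by
    filter_upwards [(hball q hq).1.1.continuousAt.eventually_ne hfq,
      Metric.isOpen_ball.mem_nhds hq] with x hfx hx
    exact (mul_eq_zero.1 (hball x hx).2).resolve_left hfx
  have hg_ball : EqOn g 0 (Metric.ball p r) :=
    AnalyticOnNhd.eqOn_zero_of_preconnected_of_eventuallyEq_zero (𝕜 := ℝ)
      (fun x hx => (hball x hx).1.2) (convex_ball p r).isPreconnected hq hg_near_q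
  obtain ⟨x, hgx, hx⟩ := (hg0.and_eventually (Metric.ball_mem_nhds p hr)).exists
  exact hgx (hg_ball hx)

theorem frequently_prod_ne_zero {κ : Type*} (s : Finset κ) {f : κ → E → ℝ}
    (hf : ∀ k ∈ s, AnalyticAt ℝ (f k) p) (hf0 : ∀ k ∈ s, ∃ᶠ x in 𝓝 p, f k x ≠ 0) :
    ∃ᶠ x in 𝓝 p, ∏ k ∈ s, f k x ≠ 0 := by
  classical
  induction s using Finset.induction_on with
  | empty => simp
  | insert k s hk ih =>
    simp only [Finset.prod_insert hk]
    simp only [Finset.forall_mem_insert] at hf hf0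
    exact frequently_mul_ne_zero hf.1 (s.analyticAt_fun_prod hf.2) hf0.1 (ih hf.2 hf0.2)

theorem exists_direction_frequently_ne_zero {f : E → ℝ} (hf : AnalyticAt ℝ f 0)
    (hf0 : ∃ᶠ x in 𝓝 0, f x ≠ 0) : ∃ v : E, ∃ᶠ t : ℝ in 𝓝 0, f (t • v) ≠ 0 := by
  by_contra! hzero
  refine hf0 ?_
  simp only [not_not]
  obtain ⟨r, hr, hball⟩ := Metric.eventually_nhds_iff_ball.1 hf.eventually_analyticAt
  filter_upwards [Metric.ball_mem_nhds (0 : E) hr] with v hv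
  have hline : AnalyticOnNhd ℝ (fun t : ℝ => f (t • v)) (Icc 0 1) := fun t ht =>
    AnalyticAt.fun_comp (f := fun t : ℝ => t • v)
      (hball _ ((convex_ball (0 : E) r).smul_mem_of_zero_mem (Metric.mem_ball_self hr) hv ht))
      (by fun_prop)
  simpa using hline.eqOn_zero_of_preconnected_of_eventuallyEq_zero isPreconnected_Icc
    (left_mem_Icc.2 zero_le_one) (hzero v) (right_mem_Icc.2 zero_le_one)

end Germs

section HadamardDivision

variable {E : Type*} [NormedAddCommGroup E] [NormedSpace ℝ E]

theorem norm_apply_le_of_norm_le_one {L : E →L[ℝ] E} (hL : ‖L‖ ≤ 1) (x : E) : ‖L x‖ ≤ ‖x‖ :=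
  (L.le_opNorm x).trans (mul_le_of_le_one_left (norm_nonneg x) hL)

theorem norm_compContinuousLinearMap_le_of_norm_le_one {k : ℕ}
    (p : ContinuousMultilinearMap ℝ (fun _ : Fin k => E) ℝ) {L : E →L[ℝ] E} (hL : ‖L‖ ≤ 1) :
    ‖p.compContinuousLinearMap fun _ => L‖ ≤ ‖p‖ :=
  (p.norm_compContinuousLinearMap_le _).trans <| mul_le_of_le_one_right (norm_nonneg _) <|
    Finset.prod_le_one (fun _ _ => norm_nonneg _) fun _ _ => hL

/-- The power series of `x ↦ ∫ s in 0..1, h (L s x)`, where `p` is the power series of `h`. -/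
noncomputable def integralSeries (p : FormalMultilinearSeries ℝ E ℝ) (L : ℝ → E →L[ℝ] E) :
    FormalMultilinearSeries ℝ E ℝ :=
  fun k => ∫ s in (0 : ℝ)..1, (p k).compContinuousLinearMap fun _ => L s

variable {L : ℝ → E →L[ℝ] E}

theorem norm_integralSeries_le (p : FormalMultilinearSeries ℝ E ℝ)
    (hL1 : ∀ s ∈ Icc (0 : ℝ) 1, ‖L s‖ ≤ 1) (k : ℕ) : ‖integralSeries p L k‖ ≤ ‖p k‖ := by
  simpa [integralSeries] using
    intervalIntegral.norm_integral_le_of_norm_le_const (a := (0 : ℝ)) (b := 1)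
    (f := fun s => (p k).compContinuousLinearMap fun _ => L s) (C := ‖p k‖) fun s hs =>
      norm_compContinuousLinearMap_le_of_norm_le_one (p k)
        (hL1 s (Ioc_subset_Icc_self (by rwa [uIoc_of_le zero_le_one] at hs)))

theorem continuous_compContinuousLinearMap (hL : Continuous L) {k : ℕ}
    (p : ContinuousMultilinearMap ℝ (fun _ : Fin k => E) ℝ) :
    Continuous fun s => p.compContinuousLinearMap fun _ => L s :=
  (ContinuousMultilinearMap.compContinuousLinearMapLRight p).cont.comp
    (continuous_pi fun _ => hL)

theorem integralSeries_apply (p : FormalMultilinearSeries ℝ E ℝ) (hL : Continuous L) (k : ℕ)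
    (y : E) : (integralSeries p L k fun _ => y) = ∫ s in (0 : ℝ)..1, p k fun _ => L s y :=
  ((ContinuousMultilinearMap.apply ℝ (fun _ : Fin k => E) ℝ fun _ => y).intervalIntegral_comp_comm
    ((continuous_compContinuousLinearMap hL (p k)).intervalIntegrable 0 1)).symm

theorem hasSum_integralSeries {h : E → ℝ} {p : FormalMultilinearSeries ℝ E ℝ} {r : ENNReal}
    (hp : HasFPowerSeriesOnBall h p 0 r) (hL : Continuous L)
    (hL1 : ∀ s ∈ Icc (0 : ℝ) 1, ‖L s‖ ≤ 1) {y : E} (hy : y ∈ Metric.eball (0 : E) r) :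
    HasSum (fun k => integralSeries p L k fun _ => y) (∫ s in (0 : ℝ)..1, h (L s y)) := by
  have hs01 : ∀ s ∈ uIoc (0 : ℝ) 1, ‖L s y‖ ≤ ‖y‖ := fun s hs =>
    norm_apply_le_of_norm_le_one
      (hL1 s (Ioc_subset_Icc_self (by rwa [uIoc_of_le zero_le_one] at hs))) y
  have hsum : Summable fun k => ‖p k‖ * ‖y‖ ^ k := by
    simpa using p.summable_norm_mul_pow (r := ‖y‖₊)
      (by simpa [enorm] using Metric.eball_subset_eball hp.r_le hy)
  simp only [integralSeries_apply p hL]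
  refine intervalIntegral.hasSum_integral_of_dominated_convergence (fun k _ => ‖p k‖ * ‖y‖ ^ k)
    (fun k => ?_) (fun k => ?_) (Eventually.of_forall fun _ _ => hsum) (by simp) ?_
  · exact Continuous.aestronglyMeasurable
      ((p k).cont.comp (continuous_pi fun _ => hL.clm_apply continuous_const))
  · filter_upwards with s hs
    refine ((p k).le_opNorm _).trans ?_
    simp only [Finset.prod_const, Finset.card_univ, Fintype.card_fin]
    gcongr
    exact hs01 s hs
  · filter_upwards with s hs
    have hLsy : L s y ∈ Metric.eball (0 : E) r := by
      simp only [Metric.mem_eball, edist_zero_right] at hy ⊢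
      exact (enorm_le_iff_norm_le.2 (hs01 s hs)).trans_lt hy
    simpa using hp.hasSum hLsy

theorem analyticAt_integral_comp {h : E → ℝ} (hh : AnalyticAt ℝ h 0) (hL : Continuous L)
    (hL1 : ∀ s ∈ Icc (0 : ℝ) 1, ‖L s‖ ≤ 1) :
    AnalyticAt ℝ (fun x => ∫ s in (0 : ℝ)..1, h (L s x)) 0 := by
  obtain ⟨p, r, hp⟩ := hh
  refine ⟨integralSeries p L, r, hp.r_le.trans
    (FormalMultilinearSeries.radius_le_of_le (norm_integralSeries_le p hL1)), hp.r_pos, ?_⟩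
  intro y hy
  simpa using hasSum_integralSeries hp hL hL1 hy

theorem norm_id_sub_add_smul_le_one {P : E →L[ℝ] E} (hP : ‖P‖ ≤ 1) {s : ℝ}
    (hs : s ∈ Icc (0 : ℝ) 1) : ‖P + s • (ContinuousLinearMap.id ℝ E - P)‖ ≤ 1 := by
  have hid : ContinuousLinearMap.id ℝ E ∈ Metric.closedBall (0 : E →L[ℝ] E) 1 := by
    simpa using ContinuousLinearMap.norm_id_le
  simpa using (convex_closedBall (0 : E →L[ℝ] E) 1).add_smul_sub_mem (by simpa using hP) hid hs

theorem exists_analyticAt_eq_add_mul {f : E → ℝ} (hf : AnalyticAt ℝ f 0) (ℓ : E →L[ℝ] ℝ) (v : E)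
    (hP : ‖ContinuousLinearMap.id ℝ E - ℓ.smulRight v‖ ≤ 1) :
    ∃ g : E → ℝ, AnalyticAt ℝ g 0 ∧ ∀ᶠ x in 𝓝 0, f x = f (x - ℓ x • v) + ℓ x * g x := by
  set P := ContinuousLinearMap.id ℝ E - ℓ.smulRight v with hPdef
  let L : ℝ → E →L[ℝ] E := fun s => P + s • (ContinuousLinearMap.id ℝ E - P)
  have hL : Continuous L := by fun_prop
  have hL1 : ∀ s ∈ Icc (0 : ℝ) 1, ‖L s‖ ≤ 1 := fun s hs => norm_id_sub_add_smul_le_one hP hs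
  have hLx : ∀ s x, L s x = (x - ℓ x • v) + s • (ℓ x • v) := fun s x => by simp [L, hPdef]
  have hderiv : ∀ y, AnalyticAt ℝ f y → AnalyticAt ℝ (fun x => fderiv ℝ f x v) y := fun y hy =>
    ((ContinuousLinearMap.apply ℝ ℝ v).analyticAt _).comp hy.fderiv
  refine ⟨_, analyticAt_integral_comp (hderiv 0 hf) hL hL1, ?_⟩
  obtain ⟨r, hr, hball⟩ := Metric.eventually_nhds_iff_ball.1 hf.eventually_analyticAt
  filter_upwards [Metric.ball_mem_nhds (0 : E) hr] with x hx
  have hsegment : ∀ s ∈ uIcc (0 : ℝ) 1, AnalyticAt ℝ f (L s x) := fun s hs => by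
    refine hball _ ?_
    rw [uIcc_of_le zero_le_one] at hs
    rw [mem_ball_zero_iff] at hx ⊢
    exact (norm_apply_le_of_norm_le_one (hL1 s hs) x).trans_lt hx
  have hLd : ∀ s, HasDerivAt (fun s => L s x) (ℓ x • v) s := fun s => by
    simp only [hLx]
    simpa using ((hasDerivAt_id s).smul_const (ℓ x • v)).const_add (x - ℓ x • v)
  have hftc := intervalIntegral.integral_eq_sub_of_hasDerivAt (a := (0 : ℝ)) (b := 1)
    (f := fun s => f (L s x)) (f' := fun s => ℓ x * fderiv ℝ f (L s x) v)
    (fun s hs => by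
      simpa [Function.comp_def] using
        (hsegment s hs).differentiableAt.hasFDerivAt.comp_hasDerivAt s (hLd s))
    (ContinuousOn.intervalIntegrable fun s hs => (continuousAt_const.mul
      ((hderiv _ (hsegment s hs)).continuousAt.comp (f := fun s => L s x)
        (hLd s).continuousAt)).continuousWithinAt)
  rw [intervalIntegral.integral_const_mul] at hftc
  rw [hftc]
  simp [hLx]

theorem exists_analyticAt_eq_update_add_mul {ι : Type*} [Fintype ι] [DecidableEq ι] (i : ι)
    {f : (ι → ℝ) → ℝ} (hf : AnalyticAt ℝ f 0) :
    ∃ g : (ι → ℝ) → ℝ, AnalyticAt ℝ g 0 ∧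
      ∀ᶠ x in 𝓝 0, f x = f (Function.update x i 0) + x i * g x := by
  have hupdate : ∀ x : ι → ℝ, x - x i • Pi.single i 1 = Function.update x i 0 := fun x => by
    ext j
    rcases eq_or_ne j i with rfl | hj <;> simp [*]
  have hP : ‖ContinuousLinearMap.id ℝ (ι → ℝ) -
      (ContinuousLinearMap.proj i).smulRight (Pi.single i (1 : ℝ))‖ ≤ 1 := by
    refine ContinuousLinearMap.opNorm_le_bound _ zero_le_one fun x => ?_
    simp only [_root_.sub_apply, ContinuousLinearMap.id_apply,
      ContinuousLinearMap.smulRight_apply, ContinuousLinearMap.proj_apply, hupdate, one_mul]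
    refine (pi_norm_le_iff_of_nonneg (norm_nonneg x)).2 fun j => ?_
    rcases eq_or_ne j i with rfl | hj
    · simp
    · simpa [hj] using norm_le_pi_norm x j
  simpa [hupdate] using exists_analyticAt_eq_add_mul hf (ContinuousLinearMap.proj i) _ hP

end HadamardDivision

section Monomials

variable {ι : Type*}

theorem tendsto_update_zero [DecidableEq ι] (i : ι) :
    Tendsto (fun x : ι → ℝ => Function.update x i 0) (𝓝 0) (𝓝 0) := by
  have hcont : Continuous fun x : ι → ℝ => Function.update x i (0 : ℝ) := by fun_prop
  simpa using hcont.tendsto 0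

variable [Fintype ι]

/-- The monomial `x ^ α = ∏ i, x i ^ α i` as a function on real vectors. -/
noncomputable def monomialFun (α : ι → ℕ) (x : ι → ℝ) : ℝ := ∏ i, x i ^ α i

theorem analyticAt_coord (i : ι) (p : ι → ℝ) : AnalyticAt ℝ (fun x : ι → ℝ => x i) p :=
  (ContinuousLinearMap.proj (R := ℝ) (φ := fun _ : ι => ℝ) i).analyticAt p

theorem analyticAt_monomialFun (α : ι → ℕ) (p : ι → ℝ) : AnalyticAt ℝ (monomialFun α) p :=
  Finset.univ.analyticAt_fun_prod fun i _ => (analyticAt_coord i p).fun_pow _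

theorem monomialFun_zero_left (x : ι → ℝ) : monomialFun 0 x = 1 := by simp [monomialFun]

theorem monomialFun_add (α β : ι → ℕ) (x : ι → ℝ) :
    monomialFun (α + β) x = monomialFun α x * monomialFun β x := by
  simp [monomialFun, pow_add, Finset.prod_mul_distrib]

theorem monomialFun_smul (k : ℕ) (α : ι → ℕ) (x : ι → ℝ) :
    monomialFun (k • α) x = monomialFun α x ^ k := by
  simp [monomialFun, Finset.prod_pow, pow_mul']

theorem monomialFun_single [DecidableEq ι] (i : ι) (x : ι → ℝ) :
    monomialFun (Pi.single i 1) x = x i := by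
  rw [monomialFun, Finset.prod_eq_single i (fun j _ hj => by simp [hj]) (by simp)]
  simp

theorem monomialFun_eq_zero {α : ι → ℕ} {i : ι} (hα : α i ≠ 0) {x : ι → ℝ} (hx : x i = 0) :
    monomialFun α x = 0 :=
  Finset.prod_eq_zero (Finset.mem_univ i) (by simp [hx, hα])

theorem monomialFun_update [DecidableEq ι] {α : ι → ℕ} {i : ι} (hα : α i = 0) (x : ι → ℝ)
    (a : ℝ) : monomialFun α (Function.update x i a) = monomialFun α x := by
  refine Finset.prod_congr rfl fun j _ => ?_
  rcases eq_or_ne j i with rfl | hj <;> simp [*]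

theorem analyticAt_comp_update_zero [DecidableEq ι] (i : ι) {f : (ι → ℝ) → ℝ}
    (hf : AnalyticAt ℝ f 0) : AnalyticAt ℝ (fun x => f (Function.update x i 0)) 0 := by
  refine AnalyticAt.fun_comp (f := fun x : ι → ℝ => Function.update x i (0 : ℝ)) (by simpa) ?_
  refine AnalyticAt.pi fun j => ?_
  rcases eq_or_ne j i with rfl | hj
  · simpa using analyticAt_const
  · simpa only [Function.update_of_ne hj] using analyticAt_coord j 0

/-- `f` is, near `0`, the monomial `x ^ α` times a nonvanishing analytic function. -/
def HasExponent (f : (ι → ℝ) → ℝ) (α : ι → ℕ) : Prop :=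
  ∃ u : (ι → ℝ) → ℝ, AnalyticAt ℝ u 0 ∧ u 0 ≠ 0 ∧ f =ᶠ[𝓝 0] fun x => monomialFun α x * u x

/-- `f` has normal crossings at `0`: it is a monomial times a nonvanishing analytic function. -/
def NormalCrossing (f : (ι → ℝ) → ℝ) : Prop := ∃ α, HasExponent f α

variable {f g : (ι → ℝ) → ℝ} {α β : ι → ℕ}

namespace HasExponent

theorem congr (hf : HasExponent f α) (h : g =ᶠ[𝓝 0] f) : HasExponent g α := by
  obtain ⟨u, hu, hu0, he⟩ := hf
  exact ⟨u, hu, hu0, h.trans he⟩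

theorem analyticAt (hf : HasExponent f α) : AnalyticAt ℝ f 0 := by
  obtain ⟨u, hu, -, he⟩ := hf
  exact ((analyticAt_monomialFun α 0).fun_mul hu).congr he.symm

theorem of_ne_zero (hf : AnalyticAt ℝ f 0) (hf0 : f 0 ≠ 0) : HasExponent f 0 :=
  ⟨f, hf, hf0, by simp [monomialFun_zero_left]⟩

theorem monomial (α : ι → ℕ) : HasExponent (monomialFun α) α :=
  ⟨fun _ => 1, analyticAt_const, one_ne_zero, by simp⟩

theorem coord [DecidableEq ι] (i : ι) : HasExponent (fun x : ι → ℝ => x i) (Pi.single i 1) :=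
  (monomial (Pi.single i 1)).congr
    (Eventually.of_forall fun x => (monomialFun_single i x).symm)

theorem mul (hf : HasExponent f α) (hg : HasExponent g β) :
    HasExponent (fun x => f x * g x) (α + β) := by
  obtain ⟨u, hu, hu0, hfu⟩ := hf
  obtain ⟨v, hv, hv0, hgv⟩ := hg
  refine ⟨fun x => u x * v x, hu.fun_mul hv, mul_ne_zero hu0 hv0, ?_⟩
  filter_upwards [hfu, hgv] with x hfx hgx
  rw [hfx, hgx, monomialFun_add]
  ring

theorem pow (hf : HasExponent f α) (k : ℕ) : HasExponent (fun x => f x ^ k) (k • α) := by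
  obtain ⟨u, hu, hu0, hfu⟩ := hf
  refine ⟨fun x => u x ^ k, hu.fun_pow k, pow_ne_zero k hu0, ?_⟩
  filter_upwards [hfu] with x hfx
  rw [hfx, monomialFun_smul, mul_pow]

theorem const_mul (hf : HasExponent f α) {c : ℝ} (hc : c ≠ 0) :
    HasExponent (fun x => c * f x) α := by
  simpa using (of_ne_zero (f := fun _ => c) analyticAt_const hc).mul hf

theorem exists_eq_monomialFun_mul (hf : HasExponent f (α + β)) :
    ∃ b, HasExponent b β ∧ f =ᶠ[𝓝 0] fun x => monomialFun α x * b x := by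
  obtain ⟨u, hu, hu0, hfu⟩ := hf
  refine ⟨fun x => monomialFun β x * u x, ⟨u, hu, hu0, EventuallyEq.rfl⟩, ?_⟩
  filter_upwards [hfu] with x hx
  rw [hx, monomialFun_add, mul_assoc]

theorem frequently_ne_zero (hf : HasExponent f α) : ∃ᶠ x in 𝓝 0, f x ≠ 0 := by
  obtain ⟨u, hu, hu0, hfu⟩ := hf
  have hdiag : Tendsto (fun t : ℝ => fun _ : ι => t) (𝓝[≠] 0) (𝓝 0) :=
    ((continuous_pi fun _ => continuous_id).tendsto (0 : ℝ)).mono_left nhdsWithin_le_nhds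
  refine hdiag.frequently (Eventually.frequently ?_)
  filter_upwards [self_mem_nhdsWithin, hdiag.eventually hfu,
    hdiag.eventually (hu.continuousAt.eventually_ne hu0)] with t ht hft hut
  rw [hft]
  exact mul_ne_zero (Finset.prod_ne_zero_iff.2 fun i _ => pow_ne_zero _ ht) hut

theorem apply_zero (hf : HasExponent f α) (hα : α ≠ 0) : f 0 = 0 := by
  obtain ⟨u, -, -, hfu⟩ := hf
  obtain ⟨i, hi⟩ := Function.ne_iff.1 hα
  rw [hfu.eq_of_nhds, monomialFun_eq_zero hi rfl, zero_mul]

theorem apply_zero_ne_zero (hf : HasExponent f 0) : f 0 ≠ 0 := by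
  obtain ⟨u, -, hu0, hfu⟩ := hf
  rwa [hfu.eq_of_nhds, monomialFun_zero_left, one_mul]

theorem eventually_apply_eq_zero (hf : HasExponent f α) {i : ι} (hi : α i ≠ 0) :
    ∀ᶠ x in 𝓝 0, x i = 0 → f x = 0 := by
  obtain ⟨u, -, -, hfu⟩ := hf
  filter_upwards [hfu] with x hfx hx
  rw [hfx, monomialFun_eq_zero hi hx, zero_mul]

theorem comp_update_zero [DecidableEq ι] (hf : HasExponent f α) {i : ι} (hi : α i = 0) :
    HasExponent (fun x => f (Function.update x i 0)) α := by
  obtain ⟨u, hu, hu0, hfu⟩ := hf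
  refine ⟨fun x => u (Function.update x i 0), analyticAt_comp_update_zero i hu, by simpa, ?_⟩
  filter_upwards [(tendsto_update_zero i).eventually hfu] with x hx
  rw [hx, monomialFun_update hi]

end HasExponent

namespace NormalCrossing

theorem congr (hf : NormalCrossing f) (h : g =ᶠ[𝓝 0] f) : NormalCrossing g :=
  hf.imp fun _ hα => hα.congr h

theorem analyticAt (hf : NormalCrossing f) : AnalyticAt ℝ f 0 := hf.elim fun _ hα => hα.analyticAt

theorem of_ne_zero (hf : AnalyticAt ℝ f 0) (hf0 : f 0 ≠ 0) : NormalCrossing f :=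
  ⟨0, .of_ne_zero hf hf0⟩

theorem coord (i : ι) : NormalCrossing fun x : ι → ℝ => x i := by
  classical exact ⟨_, .coord i⟩

theorem mul (hf : NormalCrossing f) (hg : NormalCrossing g) :
    NormalCrossing fun x => f x * g x := by
  obtain ⟨α, hα⟩ := hf
  obtain ⟨β, hβ⟩ := hg
  exact ⟨_, hα.mul hβ⟩

theorem pow (hf : NormalCrossing f) (k : ℕ) : NormalCrossing fun x => f x ^ k :=
  hf.elim fun _ hα => ⟨_, hα.pow k⟩

theorem frequently_ne_zero (hf : NormalCrossing f) : ∃ᶠ x in 𝓝 0, f x ≠ 0 :=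
  hf.elim fun _ hα => hα.frequently_ne_zero

theorem prod {κ : Type*} (s : Finset κ) {f : κ → (ι → ℝ) → ℝ}
    (hf : ∀ k ∈ s, NormalCrossing (f k)) : NormalCrossing fun x => ∏ k ∈ s, f k x := by
  classical
  induction s using Finset.induction_on with
  | empty => simpa using of_ne_zero (f := fun _ : ι → ℝ => (1 : ℝ)) analyticAt_const one_ne_zero
  | insert k s hk ih =>
    simp only [Finset.prod_insert hk]
    rw [Finset.forall_mem_insert] at hf
    exact hf.1.mul (ih hf.2)

theorem comp {κ : Type*} [Fintype κ] {φ : (κ → ℝ) → ι → ℝ} (hf : NormalCrossing f)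
    (hφ : AnalyticAt ℝ φ 0) (hφ0 : φ 0 = 0) (hcoord : ∀ i, NormalCrossing fun z => φ z i) :
    NormalCrossing fun z => f (φ z) := by
  obtain ⟨α, u, hu, hu0, hfu⟩ := hf
  have hφ_tendsto : Tendsto φ (𝓝 0) (𝓝 0) := by simpa [hφ0] using hφ.continuousAt.tendsto
  have hunit : NormalCrossing fun z => u (φ z) :=
    of_ne_zero (AnalyticAt.fun_comp (by rwa [hφ0]) hφ) (by rwa [hφ0])
  refine ((prod Finset.univ fun i _ => (hcoord i).pow (α i)).mul hunit).congr ?_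
  filter_upwards [hφ_tendsto.eventually hfu] with z hz using hz

end NormalCrossing

section Factors

theorem eventuallyEq_of_coord_mul_eq (i : ι) (hf : AnalyticAt ℝ f 0) (hg : AnalyticAt ℝ g 0)
    (h : (fun x => x i * f x) =ᶠ[𝓝 0] fun x => x i * g x) : f =ᶠ[𝓝 0] g := by
  by_contra hne
  refine frequently_mul_ne_zero (NormalCrossing.coord i).analyticAt (hf.fun_sub hg)
    (NormalCrossing.coord i).frequently_ne_zero (fun hsub => hne ?_) ?_
  · filter_upwards [hsub] with x hx using sub_eq_zero.1 (not_not.1 hx)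
  · filter_upwards [h] with x hx
    simp [mul_sub, hx]

theorem exists_eq_coord_mul_of_update_eq_zero [DecidableEq ι] (i : ι) (hf : AnalyticAt ℝ f 0)
    (h : ∀ᶠ x in 𝓝 0, f (Function.update x i 0) = 0) :
    ∃ g, AnalyticAt ℝ g 0 ∧ f =ᶠ[𝓝 0] fun x => x i * g x := by
  obtain ⟨g, hg, hfg⟩ := exists_analyticAt_eq_update_add_mul i hf
  refine ⟨g, hg, ?_⟩
  filter_upwards [h, hfg] with x hx hfgx
  rw [hfgx, hx, zero_add]

theorem exists_eq_coord_mul_or_of_mul_eq (i : ι) {m : (ι → ℝ) → ℝ} (hf : AnalyticAt ℝ f 0)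
    (hg : AnalyticAt ℝ g 0) (hm : AnalyticAt ℝ m 0)
    (h : (fun x => f x * g x) =ᶠ[𝓝 0] fun x => x i * m x) :
    (∃ f₁, AnalyticAt ℝ f₁ 0 ∧ (f =ᶠ[𝓝 0] fun x => x i * f₁ x) ∧
      (fun x => f₁ x * g x) =ᶠ[𝓝 0] m) ∨
    ∃ g₁, AnalyticAt ℝ g₁ 0 ∧ (g =ᶠ[𝓝 0] fun x => x i * g₁ x) ∧
      (fun x => f x * g₁ x) =ᶠ[𝓝 0] m := by
  classical
  have hvanish : (∀ᶠ x in 𝓝 0, f (Function.update x i 0) = 0) ∨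
      ∀ᶠ x in 𝓝 0, g (Function.update x i 0) = 0 := by
    by_contra! hne
    refine frequently_mul_ne_zero (analyticAt_comp_update_zero i hf)
      (analyticAt_comp_update_zero i hg) hne.1 hne.2 ?_
    filter_upwards [(tendsto_update_zero i).eventually h] with x hx
    simp [hx]
  refine hvanish.imp (fun hf0 => ?_) fun hg0 => ?_
  · obtain ⟨f₁, hf₁, hff₁⟩ := exists_eq_coord_mul_of_update_eq_zero i hf hf0
    refine ⟨f₁, hf₁, hff₁, eventuallyEq_of_coord_mul_eq i (hf₁.fun_mul hg) hm ?_⟩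
    filter_upwards [h, hff₁] with x hx hfx
    rw [← hx, hfx, mul_assoc]
  · obtain ⟨g₁, hg₁, hgg₁⟩ := exists_eq_coord_mul_of_update_eq_zero i hg hg0
    refine ⟨g₁, hg₁, hgg₁, eventuallyEq_of_coord_mul_eq i (hf.fun_mul hg₁) hm ?_⟩
    filter_upwards [h, hgg₁] with x hx hgx
    rw [← hx, hgx, mul_left_comm]

theorem multiIndex_induction {κ : Type*} [Finite κ] [DecidableEq κ] {p : (κ → ℕ) → Prop}
    (zero : p 0) (single_add : ∀ i β, p β → p (Pi.single i 1 + β)) (α : κ → ℕ) : p α := by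
  suffices ∀ β, p β → p (α + β) by simpa using this 0 zero
  refine Pi.single_induction (fun γ : κ → ℕ => ∀ β, p β → p (γ + β)) α (by simp)
    (fun γ δ hγ hδ β hβ => add_assoc γ δ β ▸ hγ _ (hδ _ hβ)) fun i k => ?_
  induction k with
  | zero => simp
  | succ k ih =>
    intro β hβ
    rw [Pi.single_add, add_assoc]
    exact ih _ (single_add i β hβ)

theorem HasExponent.normalCrossing_of_mul_left (h : HasExponent (fun x => f x * g x) α)
    (hf : AnalyticAt ℝ f 0) (hg : AnalyticAt ℝ g 0) : NormalCrossing f := by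
  classical
  induction α using multiIndex_induction generalizing f g with
  | zero => exact .of_ne_zero hf (left_ne_zero_of_mul h.apply_zero_ne_zero)
  | single_add i α ih =>
    obtain ⟨m, hm, hfg⟩ := h.exists_eq_monomialFun_mul
    simp only [monomialFun_single] at hfg
    rcases exists_eq_coord_mul_or_of_mul_eq i hf hg hm.analyticAt hfg with
      ⟨f₁, hf₁, hff₁, hf₁g⟩ | ⟨g₁, hg₁, -, hfg₁⟩
    · exact ((NormalCrossing.coord i).mul (ih (hm.congr hf₁g) hf₁ hg)).congr hff₁
    · exact ih (hm.congr hfg₁) hf hg₁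

theorem NormalCrossing.of_mul_left (h : NormalCrossing fun x => f x * g x)
    (hf : AnalyticAt ℝ f 0) (hg : AnalyticAt ℝ g 0) : NormalCrossing f :=
  h.elim fun _ hα => hα.normalCrossing_of_mul_left hf hg

theorem NormalCrossing.of_prod {κ : Type*} {s : Finset κ} {f : κ → (ι → ℝ) → ℝ}
    (h : NormalCrossing fun x => ∏ k ∈ s, f k x) (hf : ∀ k ∈ s, AnalyticAt ℝ (f k) 0) {k : κ}
    (hk : k ∈ s) : NormalCrossing (f k) := by
  classical
  refine NormalCrossing.of_mul_left (g := fun x => ∏ j ∈ s.erase k, f j x) ?_ (hf k hk)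
    ((s.erase k).analyticAt_fun_prod fun j hj => hf j (Finset.mem_of_mem_erase hj))
  exact h.congr (Eventually.of_forall fun x => Finset.mul_prod_erase s (f · x) hk)

end Factors

section Comparability

theorem HasExponent.eq_zero_of_coord_dvd_sub {γ : ι → ℕ} {i : ι} (hf : HasExponent f α)
    (hg : HasExponent g β) (hfg : HasExponent (fun x => f x - g x) γ) (hγ : γ i ≠ 0)
    (hβ : β i = 0) (hdisj : ∀ j, α j = 0 ∨ β j = 0) : α = 0 := by
  classical
  by_contra hα
  obtain ⟨j, hj⟩ := Function.ne_iff.1 hα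
  have hg' := (hg.comp_update_zero hβ).comp_update_zero ((hdisj j).resolve_left hj)
  have htendsto := (tendsto_update_zero i).comp (tendsto_update_zero j)
  refine hg'.frequently_ne_zero ?_
  filter_upwards [htendsto.eventually (hf.eventually_apply_eq_zero hj),
    htendsto.eventually (hfg.eventually_apply_eq_zero hγ)] with x hfx hfgx
  have hxj : Function.update (Function.update x j 0) i 0 j = 0 := by
    rcases eq_or_ne j i with rfl | hne <;> simp [*]
  have hfgx0 := hfgx (by simp)
  rw [hfx hxj, zero_sub, neg_eq_zero] at hfgx0
  exact not_not.2 hfgx0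

theorem HasExponent.eq_zero_or_eq_zero_of_sub (hf : HasExponent f α) (hg : HasExponent g β)
    (hfg : NormalCrossing fun x => f x - g x) (hdisj : ∀ j, α j = 0 ∨ β j = 0) :
    α = 0 ∨ β = 0 := by
  by_contra! hne
  obtain ⟨γ, hγ⟩ := hfg
  have hγ0 : γ ≠ 0 := by
    rintro rfl
    exact hγ.apply_zero_ne_zero (by simp [hf.apply_zero hne.1, hg.apply_zero hne.2])
  obtain ⟨i, hi⟩ := Function.ne_iff.1 hγ0
  have hγ' : HasExponent (fun x => g x - f x) γ := by
    simpa using hγ.const_mul (neg_ne_zero.2 one_ne_zero)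
  rcases hdisj i with hαi | hβi
  · exact hne.2 (hg.eq_zero_of_coord_dvd_sub hf hγ' hi hαi fun j => (hdisj j).symm)
  · exact hne.1 (hf.eq_zero_of_coord_dvd_sub hg hγ hi hβi hdisj)

theorem HasExponent.le_or_le_of_sub (hf : HasExponent f α) (hg : HasExponent g β)
    (hfg : NormalCrossing fun x => f x - g x) : α ≤ β ∨ β ≤ α := by
  have hα : α = α ⊓ β + (α - α ⊓ β) := (add_tsub_cancel_of_le inf_le_left).symm
  have hβ : β = α ⊓ β + (β - α ⊓ β) := (add_tsub_cancel_of_le inf_le_right).symm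
  rw [hα] at hf
  rw [hβ] at hg
  obtain ⟨f₁, hf₁, hff₁⟩ := hf.exists_eq_monomialFun_mul
  obtain ⟨g₁, hg₁, hgg₁⟩ := hg.exists_eq_monomialFun_mul
  have hfg₁ : NormalCrossing fun x => f₁ x - g₁ x := by
    refine NormalCrossing.of_mul_left (g := monomialFun (α ⊓ β)) (hfg.congr ?_)
      (hf₁.analyticAt.fun_sub hg₁.analyticAt) (analyticAt_monomialFun _ 0)
    filter_upwards [hff₁, hgg₁] with x hfx hgx
    rw [hfx, hgx]
    ring
  have hdisj : ∀ j, (α - α ⊓ β) j = 0 ∨ (β - α ⊓ β) j = 0 := fun j => by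
    simp only [Pi.sub_apply, Pi.inf_apply]
    omega
  refine (hf₁.eq_zero_or_eq_zero_of_sub hg₁ hfg₁ hdisj).imp (fun h => ?_) fun h => ?_
  · exact (tsub_eq_zero_iff_le.1 h).trans inf_le_right
  · exact (tsub_eq_zero_iff_le.1 h).trans inf_le_left

theorem HasExponent.le_or_le (hf : HasExponent f α) (hg : HasExponent g β)
    (hfg : f =ᶠ[𝓝 0] g ∨ NormalCrossing fun x => f x - g x) : α ≤ β ∨ β ≤ α := by
  refine hfg.elim (fun heq => ?_) fun hsub => hf.le_or_le_of_sub hg hsub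
  refine hf.le_or_le_of_sub (hg.const_mul (c := -1) (by norm_num))
    ⟨α, (hf.const_mul two_ne_zero).congr ?_⟩
  filter_upwards [heq] with x hx
  rw [← hx]
  ring

end Comparability

end Monomials

section Charts

variable {E E' E'' : Type*} [NormedAddCommGroup E] [NormedSpace ℝ E]
  [NormedAddCommGroup E'] [NormedSpace ℝ E'] [NormedAddCommGroup E''] [NormedSpace ℝ E'']

/-- The germ at `0` of the analytic map `φ` is a chart centred at an ultrafilter: `φ` maps the
ultrafilter `V`, which converges to `0`, onto the ultrafilter `U`. Ultrafilters replace the points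
at which a blow-up has to be followed, since each of them lifts to one of finitely many charts. -/
structure LiftsThrough (U : Ultrafilter E) (φ : E' → E) (V : Ultrafilter E') : Prop where
  analyticAt : AnalyticAt ℝ φ 0
  map_zero : φ 0 = 0
  le_nhds : ↑V ≤ 𝓝 (0 : E')
  map_eq : V.map φ = U

theorem tendsto_zero_of_analyticAt {φ : E' → E} (hφ : AnalyticAt ℝ φ 0) (hφ0 : φ 0 = 0) :
    Tendsto φ (𝓝 0) (𝓝 0) := by
  simpa [hφ0] using hφ.continuousAt.tendsto

namespace LiftsThrough

variable {U : Ultrafilter E} {V : Ultrafilter E'} {W : Ultrafilter E''} {φ : E' → E} {ψ : E'' → E'}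

theorem of_section {ψ : E → E'} (hφ : AnalyticAt ℝ φ 0) (hφ0 : φ 0 = 0)
    (hψ : Tendsto ψ U (𝓝 0)) (hφψ : ∀ᶠ x in (U : Filter E), φ (ψ x) = x) :
    LiftsThrough U φ (U.map ψ) where
  analyticAt := hφ
  map_zero := hφ0
  le_nhds := hψ
  map_eq := by
    refine Ultrafilter.coe_injective ?_
    rw [Ultrafilter.coe_map, Ultrafilter.coe_map, Filter.map_map]
    exact (Filter.map_congr hφψ).trans Filter.map_id

theorem refl (hU : ↑U ≤ 𝓝 (0 : E)) : LiftsThrough U id U :=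
  ⟨analyticAt_id, rfl, hU, Ultrafilter.map_id U⟩

theorem comp (hφ : LiftsThrough U φ V) (hψ : LiftsThrough V ψ W) :
    LiftsThrough U (fun z => φ (ψ z)) W where
  analyticAt := AnalyticAt.fun_comp (by simpa [hψ.map_zero] using hφ.analyticAt) hψ.analyticAt
  map_zero := by rw [hψ.map_zero, hφ.map_zero]
  le_nhds := hψ.le_nhds
  map_eq := by rw [← hφ.map_eq, ← hψ.map_eq, Ultrafilter.map_map]; rfl

theorem tendsto (hφ : LiftsThrough U φ V) : Tendsto φ (𝓝 0) (𝓝 0) :=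
  tendsto_zero_of_analyticAt hφ.analyticAt hφ.map_zero

theorem tendsto_ultrafilter (hφ : LiftsThrough U φ V) : Tendsto φ V U := by
  rw [← hφ.map_eq]; exact tendsto_map

theorem analyticAt_comp (hφ : LiftsThrough U φ V) {F : Type*} [NormedAddCommGroup F]
    [NormedSpace ℝ F] {f : E → F} (hf : AnalyticAt ℝ f 0) :
    AnalyticAt ℝ (fun z => f (φ z)) 0 :=
  AnalyticAt.fun_comp (by simpa [hφ.map_zero] using hf) hφ.analyticAt

end LiftsThrough

variable {n : ℕ} {U V : Ultrafilter (Fin n → ℝ)} {f g : (Fin n → ℝ) → ℝ}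
  {φ : (Fin n → ℝ) → Fin n → ℝ}

/-- `f` acquires normal crossings after pulling back along a chart through which `U` lifts. -/
def Monomializable (U : Ultrafilter (Fin n → ℝ)) (f : (Fin n → ℝ) → ℝ) : Prop :=
  ∃ φ V, LiftsThrough U φ V ∧ NormalCrossing fun z : Fin n → ℝ => f (φ z)

/-- Local monomialization in dimension `n`: along every ultrafilter converging to `0`, every nonzero
analytic germ acquires normal crossings in a suitable chart. -/
def LocallyMonomializable (n : ℕ) : Prop :=
  ∀ U : Ultrafilter (Fin n → ℝ), ↑U ≤ 𝓝 (0 : Fin n → ℝ) → ∀ f : (Fin n → ℝ) → ℝ,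
    AnalyticAt ℝ f 0 → (∃ᶠ x in 𝓝 0, f x ≠ 0) → Monomializable U f

theorem Monomializable.of_lift (hφ : LiftsThrough U φ V)
    (hfg : (fun z => f (φ z)) =ᶠ[𝓝 0] g) (hg : Monomializable V g) : Monomializable U f := by
  obtain ⟨ψ, W, hψ, hnc⟩ := hg
  exact ⟨_, W, hφ.comp hψ, hnc.congr (hψ.tendsto.eventually hfg)⟩

theorem Monomializable.congr (hU : ↑U ≤ 𝓝 (0 : Fin n → ℝ)) (hfg : f =ᶠ[𝓝 0] g)
    (hg : Monomializable U g) : Monomializable U f :=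
  .of_lift (.refl hU) hfg hg

end Charts

section FirstVariable

variable {n : ℕ} {E : Type*} [NormedAddCommGroup E] [NormedSpace ℝ E]

theorem analyticAt_vecTail (p : Fin (n + 1) → ℝ) :
    AnalyticAt ℝ (vecTail : (Fin (n + 1) → ℝ) → Fin n → ℝ) p :=
  AnalyticAt.pi fun i => analyticAt_coord i.succ p

theorem analyticAt_vecCons {f : E → ℝ} {g : E → Fin n → ℝ} {p : E} (hf : AnalyticAt ℝ f p)
    (hg : AnalyticAt ℝ g p) : AnalyticAt ℝ (fun x => vecCons (f x) (g x)) p := by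
  refine AnalyticAt.pi fun i => ?_
  refine Fin.cases ?_ (fun i => ?_) i
  · simpa using hf
  · simpa using analyticAt_pi_iff.1 hg i

theorem tendsto_vecTail : Tendsto (vecTail : (Fin (n + 1) → ℝ) → Fin n → ℝ) (𝓝 0) (𝓝 0) :=
  tendsto_zero_of_analyticAt (analyticAt_vecTail 0) tail_zero

theorem tendsto_vecCons {α : Type*} {l : Filter α} {f : α → ℝ} {g : α → Fin n → ℝ}
    (hf : Tendsto f l (𝓝 0)) (hg : Tendsto g l (𝓝 0)) :
    Tendsto (fun x => vecCons (f x) (g x)) l (𝓝 0) := by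
  refine tendsto_pi_nhds.2 fun i => ?_
  refine Fin.cases ?_ (fun i => ?_) i
  · simpa using hf
  · simpa using tendsto_pi_nhds.1 hg i

theorem tendsto_coord (i : Fin n) : Tendsto (fun x : Fin n → ℝ => x i) (𝓝 0) (𝓝 0) :=
  tendsto_zero_of_analyticAt (analyticAt_coord i 0) rfl

theorem analyticAt_comp_vecTail {f : (Fin n → ℝ) → E} (hf : AnalyticAt ℝ f 0) :
    AnalyticAt ℝ (fun z : Fin (n + 1) → ℝ => f (vecTail z)) 0 :=
  AnalyticAt.fun_comp (by simpa using hf) (analyticAt_vecTail 0)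

theorem update_zero_eq_vecCons (z : Fin (n + 1) → ℝ) :
    Function.update z 0 0 = vecCons 0 (vecTail z) := by
  ext i
  refine Fin.cases ?_ (fun i => ?_) i <;> simp [vecTail]

theorem vecCons_apply_zero_vecTail (z : Fin (n + 1) → ℝ) : vecCons (z 0) (vecTail z) = z :=
  cons_head_tail z

theorem NormalCrossing.comp_vecTail {f : (Fin n → ℝ) → ℝ} (hf : NormalCrossing f) :
    NormalCrossing fun z : Fin (n + 1) → ℝ => f (vecTail z) :=
  hf.comp (analyticAt_vecTail 0) tail_zero fun i => .coord i.succ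

/-- The restriction of `g` to the first coordinate axis. -/
def axisRestriction (g : (Fin (n + 1) → ℝ) → ℝ) (t : ℝ) : ℝ := g (vecCons t 0)

theorem analyticAt_axisRestriction {g : (Fin (n + 1) → ℝ) → ℝ} (hg : AnalyticAt ℝ g 0) :
    AnalyticAt ℝ (axisRestriction g) 0 :=
  AnalyticAt.fun_comp (g := g) (f := fun t : ℝ => vecCons t 0) (by simpa using hg)
    (analyticAt_vecCons analyticAt_id analyticAt_const)

theorem eventuallyEq_axisRestriction {f g : (Fin (n + 1) → ℝ) → ℝ} (hfg : f =ᶠ[𝓝 0] g) :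
    axisRestriction f =ᶠ[𝓝 0] axisRestriction g :=
  (tendsto_vecCons tendsto_id tendsto_const_nhds).eventually hfg

theorem exists_eq_sum_mul_pow_add (D : ℕ) : ∀ {g : (Fin (n + 1) → ℝ) → ℝ}, AnalyticAt ℝ g 0 →
    ∃ (a : ℕ → (Fin n → ℝ) → ℝ) (V : (Fin (n + 1) → ℝ) → ℝ), (∀ j, AnalyticAt ℝ (a j) 0) ∧
      AnalyticAt ℝ V 0 ∧
      g =ᶠ[𝓝 0] fun z => ∑ j ∈ Finset.range D, a j (vecTail z) * z 0 ^ j + z 0 ^ D * V z := by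
  induction D with
  | zero => exact fun {g} hg => ⟨0, g, fun _ => analyticAt_const, hg, by simp⟩
  | succ D ih =>
    intro g hg
    obtain ⟨g₁, hg₁, hgg₁⟩ := exists_analyticAt_eq_update_add_mul 0 hg
    obtain ⟨a, V, ha, hV, hg₁V⟩ := ih hg₁
    refine ⟨fun j => j.casesOn (fun y => g (vecCons 0 y)) a, V, ?_, hV, ?_⟩
    · rintro (_ | j)
      · exact AnalyticAt.fun_comp (by simpa using hg)
          (analyticAt_vecCons analyticAt_const analyticAt_id)
      · exact ha j
    · filter_upwards [hgg₁, hg₁V] with z hz hz₁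
      have hshift : z 0 * ∑ j ∈ Finset.range D, a j (vecTail z) * z 0 ^ j =
          ∑ j ∈ Finset.range D, a j (vecTail z) * z 0 ^ (j + 1) := by
        rw [Finset.mul_sum]
        exact Finset.sum_congr rfl fun j _ => by ring
      calc g z = g (vecCons 0 (vecTail z)) +
            z 0 * (∑ j ∈ Finset.range D, a j (vecTail z) * z 0 ^ j + z 0 ^ D * V z) := by
            rw [hz, hz₁, update_zero_eq_vecCons]
        _ = ∑ j ∈ Finset.range D, a j (vecTail z) * z 0 ^ (j + 1) +
            g (vecCons 0 (vecTail z)) * z 0 ^ 0 + z 0 ^ (D + 1) * V z := by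
            rw [mul_add, hshift]; ring
        _ = _ := by rw [Finset.sum_range_succ']; rfl

end FirstVariable

section OneVariable

theorem iteratedDeriv_eq_factorial_mul {F v : ℝ → ℝ} {a : ℕ → ℝ} {D k : ℕ}
    (hv : AnalyticAt ℝ v 0)
    (hF : F =ᶠ[𝓝 0] fun t => ∑ j ∈ Finset.range D, a j * t ^ j + t ^ D * v t) (hk : k < D) :
    iteratedDeriv k F 0 = k.factorial * a k := by
  have hpow : AnalyticAt ℝ (fun t : ℝ => t ^ D) 0 := analyticAt_id.fun_pow D
  have hremainder : iteratedDeriv k (fun t => t ^ D * v t) 0 = 0 := by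
    refine (natCast_le_analyticOrderAt_iff_iteratedDeriv_eq_zero (hpow.fun_mul hv)).1 ?_ k hk
    exact (natCast_le_analyticOrderAt (hpow.fun_mul hv)).2 ⟨v, hv, by simp⟩
  have hsum : ∀ j ∈ Finset.range D, ContDiffAt ℝ k (fun t : ℝ => a j * t ^ j) 0 :=
    fun j _ => by fun_prop
  rw [hF.iteratedDeriv_eq k, iteratedDeriv_fun_add (ContDiffAt.sum hsum)
    (hpow.fun_mul hv).contDiffAt, hremainder, add_zero, iteratedDeriv_fun_sum hsum,
    Finset.sum_eq_single k]
  · rw [iteratedDeriv_const_mul_field, iteratedDeriv_fun_pow_zero]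
    simp [mul_comm]
  · intro j _ hjk
    rw [iteratedDeriv_const_mul_field, iteratedDeriv_fun_pow_zero]
    simp [hjk.symm]
  · exact fun h => absurd (Finset.mem_range.2 hk) h

end OneVariable

section Tschirnhaus

variable {n : ℕ}

theorem exists_implicit_vecCons {h : (Fin (n + 1) → ℝ) → ℝ} (hh : AnalyticAt ℝ h 0) (h0 : h 0 = 0)
    (hderiv : deriv (axisRestriction h) 0 ≠ 0) : ∃ θ : (Fin n → ℝ) → ℝ, AnalyticAt ℝ θ 0 ∧
      θ 0 = 0 ∧ ∀ᶠ y in 𝓝 0, h (vecCons (θ y) y) = 0 := by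
  set F : (Fin n → ℝ) × ℝ → ℝ := fun p => h (vecCons p.2 p.1) with hF_def
  have hF : AnalyticAt ℝ F (0, 0) := AnalyticAt.fun_comp (g := h) (by simpa using hh)
    (analyticAt_vecCons analyticAt_snd analyticAt_fst)
  have hcont : ContDiffAt ℝ ⊤ F (0, 0) := hF.contDiffAt
  set L : ℝ →L[ℝ] ℝ := fderiv ℝ F (0, 0) ∘L .inr ℝ (Fin n → ℝ) ℝ
  have hL : HasFDerivAt (axisRestriction h) L 0 :=
    hF.differentiableAt.hasFDerivAt.comp (0 : ℝ) (hasFDerivAt_prodMk_right 0 0)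
  have hL_inv : L.IsInvertible := by
    refine ⟨ContinuousLinearEquiv.unitsEquivAut ℝ (Units.mk0 _ hderiv), ?_⟩
    ext
    simp [hL.hasDerivAt.deriv]
  refine ⟨hcont.implicitFunction (by simp) hL_inv,
    (hcont.contDiffAt_implicitFunction (by simp) hL_inv).analyticAt,
    hcont.implicitFunction_apply_self (by simp) hL_inv, ?_⟩
  filter_upwards [hcont.eventually_apply_implicitFunction (by simp) hL_inv] with y hy
  simpa [hF_def, h0] using hy

theorem exists_expansion_translate (D : ℕ) {g : (Fin (n + 1) → ℝ) → ℝ} (hg : AnalyticAt ℝ g 0) :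
    ∃ (A : ℕ → (Fin (n + 1) → ℝ) → ℝ) (V : (Fin (n + 2) → ℝ) → ℝ), (∀ j, AnalyticAt ℝ (A j) 0) ∧
      AnalyticAt ℝ V 0 ∧ ∀ᶠ x in 𝓝 0, g (vecCons (x 1 + x 0) (vecTail (vecTail x))) =
        ∑ j ∈ Finset.range D, A j (vecTail x) * x 0 ^ j + x 0 ^ D * V x := by
  refine exists_eq_sum_mul_pow_add D (AnalyticAt.fun_comp (g := g) (by simpa using hg)
    (analyticAt_vecCons ((analyticAt_coord 1 0).fun_add (analyticAt_coord 0 0)) ?_))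
  exact AnalyticAt.fun_comp (analyticAt_vecTail _) (analyticAt_vecTail 0)

theorem iteratedDeriv_axisRestriction_eq {D : ℕ} {g : (Fin (n + 1) → ℝ) → ℝ}
    {A : ℕ → (Fin (n + 1) → ℝ) → ℝ} {V : (Fin (n + 2) → ℝ) → ℝ} (hV : AnalyticAt ℝ V 0)
    (hgA : ∀ᶠ x in 𝓝 0, g (vecCons (x 1 + x 0) (vecTail (vecTail x))) =
      ∑ j ∈ Finset.range D, A j (vecTail x) * x 0 ^ j + x 0 ^ D * V x) {k : ℕ} (hk : k < D) :
    iteratedDeriv k (axisRestriction g) =ᶠ[𝓝 0]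
      fun s => k.factorial * axisRestriction (A k) s := by
  have hline : Tendsto (fun s : ℝ => (vecCons 0 (vecCons s 0) : Fin (n + 2) → ℝ)) (𝓝 0) (𝓝 0) :=
    tendsto_vecCons tendsto_const_nhds (tendsto_vecCons tendsto_id tendsto_const_nhds)
  filter_upwards [hline.eventually hgA.eventually_nhds,
    hline.eventually hV.eventually_analyticAt] with s hs hVs
  have hvertical : AnalyticAt ℝ (fun t : ℝ => (vecCons t (vecCons s 0) : Fin (n + 2) → ℝ)) 0 :=
    analyticAt_vecCons analyticAt_id analyticAt_const
  have hshift := congrFun (iteratedDeriv_comp_const_add k (axisRestriction g) s) 0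
  simp only [add_zero] at hshift
  rw [← hshift]
  refine iteratedDeriv_eq_factorial_mul (D := D) (a := fun j => A j (vecCons s 0))
    (v := fun t => V (vecCons t (vecCons s 0))) (AnalyticAt.fun_comp hVs hvertical) ?_ hk
  filter_upwards [hvertical.continuousAt.eventually hs] with t ht
  simpa [axisRestriction] using ht

theorem axisRestriction_zero (g : (Fin (n + 1) → ℝ) → ℝ) : axisRestriction g 0 = g 0 := by
  simp [axisRestriction]

theorem ne_zero_of_analyticOrderAt_pow_mul {D : ℕ} {v : ℝ → ℝ} (hv : AnalyticAt ℝ v 0)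
    (hord : analyticOrderAt (fun t => t ^ D * v t) 0 = D) : v 0 ≠ 0 := by
  intro hv0
  have hle : (1 : ℕ∞) ≤ analyticOrderAt v 0 :=
    Order.one_le_iff_ne_zero.2 (hv.analyticOrderAt_ne_zero.2 hv0)
  obtain ⟨w, hw, hvw⟩ := (natCast_le_analyticOrderAt hv (n := 1)).1 (by simpa using hle)
  have hlt : ((D + 1 : ℕ) : ℕ∞) ≤ analyticOrderAt (fun t => t ^ D * v t) 0 := by
    refine (natCast_le_analyticOrderAt ((analyticAt_id.fun_pow D).fun_mul hv)).2 ⟨w, hw, ?_⟩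
    filter_upwards [hvw] with t ht
    simp only [id, ht, sub_zero, smul_eq_mul]
    ring
  rw [hord, Nat.cast_le] at hlt
  omega

theorem apply_zero_of_expansion_translate {d : ℕ} {g : (Fin (n + 1) → ℝ) → ℝ}
    (hg : AnalyticAt ℝ g 0) (hord : analyticOrderAt (axisRestriction g) 0 = (d + 1 : ℕ))
    {A : ℕ → (Fin (n + 1) → ℝ) → ℝ} {W : (Fin (n + 2) → ℝ) → ℝ} (hW : AnalyticAt ℝ W 0)
    (hgA : ∀ᶠ x in 𝓝 0, g (vecCons (x 1 + x 0) (vecTail (vecTail x))) =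
      ∑ j ∈ Finset.range (d + 1), A j (vecTail x) * x 0 ^ j + x 0 ^ (d + 1) * W x) :
    (∀ j < d + 1, A j 0 = 0) ∧ deriv (axisRestriction (A d)) 0 ≠ 0 ∧ W 0 ≠ 0 := by
  have hcoeff : ∀ j < d + 1, iteratedDeriv j (axisRestriction g) =ᶠ[𝓝 0]
      fun s => j.factorial * axisRestriction (A j) s :=
    fun j hj => iteratedDeriv_axisRestriction_eq hW hgA hj
  obtain ⟨hvanish, hlead⟩ := (analyticOrderAt_eq_nat_iff_iteratedDeriv_eq_zero
    (analyticAt_axisRestriction hg)).1 hord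
  have hA0 : ∀ j < d + 1, A j 0 = 0 := fun j hj => by
    have hzero := (hcoeff j hj).eq_of_nhds.symm.trans (hvanish j hj)
    rw [axisRestriction_zero] at hzero
    exact (mul_eq_zero.1 hzero).resolve_left (by positivity)
  refine ⟨hA0, ?_, ?_⟩
  · rw [iteratedDeriv_succ, (hcoeff d d.lt_succ_self).deriv_eq, deriv_const_mul_field] at hlead
    exact right_ne_zero_of_mul hlead
  · have haxis : axisRestriction g =ᶠ[𝓝 0] fun t => t ^ (d + 1) * axisRestriction W t := by
      filter_upwards [eventuallyEq_axisRestriction hgA] with t ht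
      have hsum : ∑ j ∈ Finset.range (d + 1), A j 0 * t ^ j = 0 :=
        Finset.sum_eq_zero fun j hj => by rw [hA0 j (Finset.mem_range.1 hj), zero_mul]
      simpa [axisRestriction, hsum] using ht
    rw [← axisRestriction_zero W]
    exact ne_zero_of_analyticOrderAt_pow_mul (analyticAt_axisRestriction hW)
      ((analyticOrderAt_congr haxis).symm.trans hord)

/-- The translation `θ` is the zero of the coefficient of degree `d`, as a function of the base
point of the expansion; the implicit function theorem provides it without Weierstrass
preparation. -/
theorem exists_tschirnhaus {d : ℕ} {g : (Fin (n + 1) → ℝ) → ℝ} (hg : AnalyticAt ℝ g 0)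
    (hord : analyticOrderAt (axisRestriction g) 0 = (d + 1 : ℕ)) :
    ∃ (θ : (Fin n → ℝ) → ℝ) (a : ℕ → (Fin n → ℝ) → ℝ) (V : (Fin (n + 1) → ℝ) → ℝ),
      AnalyticAt ℝ θ 0 ∧ θ 0 = 0 ∧ (∀ j, AnalyticAt ℝ (a j) 0) ∧ (∀ j < d, a j 0 = 0) ∧
      AnalyticAt ℝ V 0 ∧ V 0 ≠ 0 ∧ ∀ᶠ z in 𝓝 0, g (vecCons (z 0 + θ (vecTail z)) (vecTail z)) =
        ∑ j ∈ Finset.range d, a j (vecTail z) * z 0 ^ j + z 0 ^ (d + 1) * V z := by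
  obtain ⟨A, W, hA, hW, hgA⟩ := exists_expansion_translate (d + 1) hg
  obtain ⟨hA0, hderiv, hW0⟩ := apply_zero_of_expansion_translate hg hord hW hgA
  obtain ⟨θ, hθ, hθ0, hAθ⟩ := exists_implicit_vecCons (hA d) (hA0 d d.lt_succ_self) hderiv
  have hgraph : AnalyticAt ℝ (fun y => vecCons (θ y) y) 0 := analyticAt_vecCons hθ analyticAt_id
  have hgraph0 : vecCons (θ 0) (0 : Fin n → ℝ) = 0 := by simp [hθ0]
  set Φ : (Fin (n + 1) → ℝ) → Fin (n + 2) → ℝ :=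
    fun z => vecCons (z 0) (vecCons (θ (vecTail z)) (vecTail z)) with hΦ_def
  have hΦ : AnalyticAt ℝ Φ 0 := analyticAt_vecCons (analyticAt_coord 0 0)
    (analyticAt_vecCons (analyticAt_comp_vecTail hθ) (analyticAt_vecTail 0))
  have hΦ0 : Φ 0 = 0 := by simp [hΦ_def, hθ0]
  refine ⟨θ, fun j y => A j (vecCons (θ y) y), fun z => W (Φ z), hθ, hθ0,
    fun j => AnalyticAt.fun_comp (g := A j) (by simpa [hgraph0] using hA j) hgraph,
    fun j hj => by simpa [hθ0] using hA0 j (by omega),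
    AnalyticAt.fun_comp (g := W) (by rwa [hΦ0]) hΦ, by simpa only [hΦ0] using hW0, ?_⟩
  filter_upwards [(tendsto_zero_of_analyticAt hΦ hΦ0).eventually hgA,
    tendsto_vecTail.eventually hAθ] with z hz hzθ
  simpa [hΦ_def, Finset.sum_range_succ, hzθ, add_comm] using hz

end Tschirnhaus

section OrderDrop

open Polynomial

theorem analyticOrderAt_eval_const_add {P : ℝ[X]} (hP : P ≠ 0) (c : ℝ) :
    analyticOrderAt (fun t => P.eval (c + t)) 0 = P.rootMultiplicity c := by
  obtain ⟨R, hPR, hR⟩ := exists_eq_pow_rootMultiplicity_mul_and_not_dvd P hP c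
  have hanalytic : ∀ Q : ℝ[X], AnalyticAt ℝ (fun t => Q.eval (c + t)) 0 := fun Q =>
    AnalyticAt.fun_comp (g := fun t => Q.eval t) (analyticAt_id.aeval_polynomial Q)
      (analyticAt_const.fun_add analyticAt_id)
  refine (hanalytic P).analyticOrderAt_eq_natCast.2 ⟨_, hanalytic R, ?_, .of_forall fun t => ?_⟩
  · simpa [dvd_iff_isRoot] using hR
  · conv_lhs => rw [hPR]
    simp

/-- A root `c` of multiplicity `d + 1` would make `P` a multiple of `(X - c) ^ (d + 1)`, whose
coefficient of degree `d` vanishes only for `c = 0`. -/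
theorem rootMultiplicity_lt_of_coeff_eq_zero {P : ℝ[X]} {d i : ℕ} (hdeg : P.natDegree = d + 1)
    (hd : P.coeff d = 0) (hi : i < d) (hPi : P.coeff i ≠ 0) (c : ℝ) :
    P.rootMultiplicity c < d + 1 := by
  by_contra! hmult
  have hP0 : P ≠ 0 := fun h => hPi (by simp [h])
  have hPc : P = C P.leadingCoeff * (X + C (-c)) ^ (d + 1) := by
    have hdvd := (le_rootMultiplicity_iff hP0).1 hmult
    refine (eq_leadingCoeff_mul_of_monic_of_dvd_of_natDegree_le ((monic_X_add_C _).pow _) ?_ ?_)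
    · simpa [sub_eq_add_neg] using hdvd
    · rw [natDegree_pow, natDegree_X_add_C, hdeg, mul_one]
  have hcoeff (k : ℕ) :
      P.coeff k = P.leadingCoeff * ((-c) ^ (d + 1 - k) * (d + 1).choose k) := by
    rw [← coeff_X_add_C_pow, ← coeff_C_mul, ← hPc]
  have hc : c = 0 := by
    have h := hcoeff d
    have hd' : (d : ℝ) + 1 ≠ 0 := by positivity
    simpa [hd, hP0, hd'] using h
  exact hPi (by simp [hcoeff i, hc, show d + 1 - i ≠ 0 by omega])

theorem analyticOrderAt_sum_const_add_pow_lt {d i : ℕ} {b : ℕ → ℝ} {v : ℝ} (hi : i < d)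
    (hb : b i ≠ 0) (hv : v ≠ 0) (c : ℝ) : analyticOrderAt
      (fun t => ∑ j ∈ Finset.range d, b j * (c + t) ^ j + v * (c + t) ^ (d + 1)) 0 < d + 1 := by
  set P : ℝ[X] := ∑ j ∈ Finset.range d, C (b j) * X ^ j + C v * X ^ (d + 1) with hP_def
  have hcoeff (k : ℕ) :
      P.coeff k = (if k < d then b k else 0) + if k = d + 1 then v else 0 := by
    simp [hP_def, coeff_X_pow, finsetSum_coeff]
  have hPi : P.coeff i ≠ 0 := by
    simpa [hcoeff, hi, show i ≠ d + 1 by omega] using hb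
  have hdeg : P.natDegree = d + 1 := by
    refine natDegree_eq_of_le_of_coeff_ne_zero (natDegree_le_iff_coeff_eq_zero.2 fun k hk => ?_) ?_
    · simp [hcoeff, show ¬ k < d by omega, show k ≠ d + 1 by omega]
    · simpa [hcoeff] using hv
  have horder : analyticOrderAt (fun t => P.eval (c + t)) 0 < d + 1 := by
    rw [analyticOrderAt_eval_const_add (fun h => hPi (by simp [h]))]
    exact_mod_cast rootMultiplicity_lt_of_coeff_eq_zero hdeg (by simp [hcoeff]) hi hPi c
  convert horder using 3
  simp [hP_def, eval_finsetSum]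

end OrderDrop

section BlowUps

theorem tendsto_div_or_tendsto_div_zero {Ω : Type*} (U : Ultrafilter Ω) (a b : Ω → ℝ) :
    (∃ c, Tendsto (fun ω => a ω / b ω) U (𝓝 c) ∧
      ∀ᶠ ω in (U : Filter Ω), b ω * (a ω / b ω) = a ω) ∨
    Tendsto (fun ω => b ω / a ω) U (𝓝 0) ∧ ∀ᶠ ω in (U : Filter Ω), a ω ≠ 0 := by
  by_cases hbound : ∃ C, ∀ᶠ ω in (U : Filter Ω), |a ω| ≤ C * |b ω|
  · obtain ⟨C, hC⟩ := hbound
    have hquot : ∀ᶠ ω in (U : Filter Ω), a ω / b ω ∈ Icc (-|C|) |C| := by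
      filter_upwards [hC] with ω hω
      rw [mem_Icc, ← abs_le, abs_div]
      exact div_le_of_le_mul₀ (abs_nonneg _) (abs_nonneg _)
        (hω.trans (by gcongr; exact le_abs_self C))
    obtain ⟨c, -, hc⟩ := isCompact_Icc.ultrafilter_le_nhds (U.map fun ω => a ω / b ω)
      (le_principal_iff.2 hquot)
    refine .inl ⟨c, hc, hC.mono fun ω hω => ?_⟩
    exact mul_div_cancel_of_imp' fun hb => by simpa [hb] using hω
  · push Not at hbound
    have hlt (C : ℝ) : ∀ᶠ ω in (U : Filter Ω), C * |b ω| < |a ω| := hbound C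
    have ha : ∀ᶠ ω in (U : Filter Ω), a ω ≠ 0 := by simpa using hlt 0
    refine .inr ⟨Metric.tendsto_nhds.2 fun ε hε => ?_, ha⟩
    filter_upwards [hlt (1 / ε), ha] with ω hω haω
    rw [dist_zero_right, norm_div, Real.norm_eq_abs, Real.norm_eq_abs,
      div_lt_iff₀ (abs_pos.2 haω), mul_comm, ← div_lt_iff₀ hε]
    simpa [div_eq_inv_mul] using hω

variable {n : ℕ}

theorem NormalCrossing.const_add_coord (c : ℝ) (i : Fin n) :
    NormalCrossing fun x : Fin n → ℝ => c + x i := by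
  rcases eq_or_ne c 0 with rfl | hc
  · simpa using NormalCrossing.coord i
  · exact .of_ne_zero (analyticAt_const.fun_add (analyticAt_coord i 0)) (by simpa)

variable {U : Ultrafilter (Fin (n + 1) → ℝ)}

theorem exists_lift_rescale_zero (hU : ↑U ≤ 𝓝 (0 : Fin (n + 1) → ℝ)) {r : (Fin n → ℝ) → ℝ}
    (hr : AnalyticAt ℝ r 0) (hr0 : r 0 = 0) {c : ℝ}
    (hc : Tendsto (fun z => z 0 / r (vecTail z)) U (𝓝 c))
    (heq : ∀ᶠ z in (U : Filter (Fin (n + 1) → ℝ)), r (vecTail z) * (z 0 / r (vecTail z)) = z 0) :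
    ∃ V, LiftsThrough U (fun w => vecCons (r (vecTail w) * (c + w 0)) (vecTail w)) V := by
  refine ⟨_, .of_section (ψ := fun z => vecCons (z 0 / r (vecTail z) - c) (vecTail z))
    (analyticAt_vecCons ((analyticAt_comp_vecTail hr).fun_mul
      (analyticAt_const.fun_add (analyticAt_coord 0 0))) (analyticAt_vecTail 0))
    (by simp [hr0]) (tendsto_vecCons ?_ (tendsto_vecTail.mono_left hU)) ?_⟩
  · simpa using hc.sub_const c
  · filter_upwards [heq] with z hz
    simp [hz, vecCons_apply_zero_vecTail]

theorem exists_lift_rescale_succ (hU : ↑U ≤ 𝓝 (0 : Fin (n + 1) → ℝ)) {i : Fin n}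
    (hi : Tendsto (fun z : Fin (n + 1) → ℝ => z i.succ / z 0) U (𝓝 0))
    (h0 : ∀ᶠ z in (U : Filter (Fin (n + 1) → ℝ)), z 0 ≠ 0) :
    ∃ V, LiftsThrough U (fun w => Function.update w i.succ (w 0 * w i.succ)) V := by
  refine ⟨_, .of_section (ψ := fun z => Function.update z i.succ (z i.succ / z 0))
    (AnalyticAt.pi fun j => ?_) ?_ (tendsto_pi_nhds.2 fun j => ?_) ?_⟩
  · rcases eq_or_ne j i.succ with rfl | hj
    · simpa using (analyticAt_coord 0 0).fun_mul (analyticAt_coord i.succ 0)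
    · simpa [hj] using analyticAt_coord j 0
  · simp
  · rcases eq_or_ne j i.succ with rfl | hj
    · simpa using hi
    · simpa [hj] using (tendsto_coord j).mono_left hU
  · filter_upwards [h0] with z hz
    simp [(Fin.succ_ne_zero i).symm, mul_div_cancel₀ _ hz]

theorem LiftsThrough.apply_zero_eq_of_tendsto_div {E E' : Type*} [NormedAddCommGroup E]
    [NormedSpace ℝ E] [NormedAddCommGroup E'] [NormedSpace ℝ E'] {U : Ultrafilter E} {φ : E' → E}
    {V : Ultrafilter E'} (hφ : LiftsThrough U φ V) {f g : E → ℝ} {ν : E' → ℝ} {c : ℝ}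
    (hν : ContinuousAt ν 0) (hfg : Tendsto (fun x => f x / g x) U (𝓝 c))
    (hg : ∀ᶠ x in (U : Filter E), g x ≠ 0) (hfν : ∀ᶠ w in 𝓝 0, f (φ w) = g (φ w) * ν w) :
    ν 0 = c := by
  refine tendsto_nhds_unique (hν.tendsto.mono_left hφ.le_nhds)
    ((hfg.comp hφ.tendsto_ultrafilter).congr' ?_)
  filter_upwards [hφ.le_nhds hfν, hφ.tendsto_ultrafilter.eventually hg] with w hw hgw
  rw [Function.comp_apply, hw, mul_div_cancel_left₀ _ hgw]

/-- In some chart through which `U` lifts and whose components have normal crossings, the first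
coordinate divides the monomial `x ^ β` in the remaining ones. -/
def MonomialDivisible (U : Ultrafilter (Fin (n + 1) → ℝ)) (β : Fin n → ℕ) : Prop :=
  ∃ φ V ν, LiftsThrough U φ V ∧ (∀ i, NormalCrossing fun w : Fin (n + 1) → ℝ => φ w i) ∧
    AnalyticAt ℝ ν 0 ∧ ∀ᶠ w in 𝓝 0, monomialFun β (vecTail (φ w)) = φ w 0 * ν w

theorem NormalCrossing.rescale_coord (i : Fin n) (c : ℝ) (j : Fin (n + 1)) : NormalCrossing
    fun w : Fin (n + 1) → ℝ => vecCons (vecTail w i * (c + w 0)) (vecTail w) j := by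
  refine Fin.cases ?_ (fun j => ?_) j
  · exact (NormalCrossing.coord i.succ).mul (.const_add_coord c 0)
  · exact .coord j.succ

theorem monomialDivisible_of_rescale {i : Fin n} {c : ℝ} (hc : c ≠ 0) {β : Fin n → ℕ}
    {V : Ultrafilter (Fin (n + 1) → ℝ)}
    (hV : LiftsThrough U (fun w => vecCons (vecTail w i * (c + w 0)) (vecTail w)) V) :
    MonomialDivisible U (Pi.single i 1 + β) := by
  have hden : AnalyticAt ℝ (fun w : Fin (n + 1) → ℝ => c + w 0) 0 :=
    analyticAt_const.fun_add (analyticAt_coord 0 0)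
  have hden0 : c + (0 : Fin (n + 1) → ℝ) 0 ≠ 0 := by simpa
  refine ⟨_, V, fun w => monomialFun β (vecTail w) / (c + w 0), hV, .rescale_coord i c,
    (analyticAt_comp_vecTail (analyticAt_monomialFun β 0)).fun_div hden hden0, ?_⟩
  filter_upwards [hden.continuousAt.eventually_ne hden0] with w hw
  rw [tail_cons, cons_val_zero, monomialFun_add, monomialFun_single, mul_assoc,
    mul_div_cancel₀ _ hw]

theorem MonomialDivisible.of_rescale {i : Fin n} {β : Fin n → ℕ}
    {V : Ultrafilter (Fin (n + 1) → ℝ)}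
    (hV : LiftsThrough U (fun w => vecCons (vecTail w i * (0 + w 0)) (vecTail w)) V)
    (hβ : MonomialDivisible V β) : MonomialDivisible U (Pi.single i 1 + β) := by
  obtain ⟨ψ, W, ν, hψ, hcoord, hν, hdvd⟩ := hβ
  refine ⟨_, W, ν, hV.comp hψ, fun j => (NormalCrossing.rescale_coord i 0 j).comp hψ.analyticAt
    hψ.map_zero hcoord, hν, ?_⟩
  filter_upwards [hdvd] with w hw
  rw [tail_cons, cons_val_zero, monomialFun_add, monomialFun_single, hw, zero_add, mul_assoc]

theorem monomialDivisible_of_rescale_succ {i : Fin n} {β : Fin n → ℕ}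
    {V : Ultrafilter (Fin (n + 1) → ℝ)}
    (hV : LiftsThrough U (fun w => Function.update w i.succ (w 0 * w i.succ)) V) :
    MonomialDivisible U (Pi.single i 1 + β) := by
  refine ⟨_, V, fun w => w i.succ * monomialFun β (vecTail
    (Function.update w i.succ (w 0 * w i.succ))), hV, fun j => ?_, ?_, .of_forall fun w => ?_⟩
  · rcases eq_or_ne j i.succ with rfl | hj
    · simpa using (NormalCrossing.coord 0).mul (.coord i.succ)
    · simpa [hj] using NormalCrossing.coord j
  · refine (analyticAt_coord i.succ 0).fun_mul ?_
    exact hV.analyticAt_comp (analyticAt_comp_vecTail (analyticAt_monomialFun β 0))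
  · rw [monomialFun_add, monomialFun_single]
    simp [vecTail, (Fin.succ_ne_zero i).symm, mul_assoc]

theorem monomialDivisible_of_tendsto (β : Fin n → ℕ) :
    ∀ {U : Ultrafilter (Fin (n + 1) → ℝ)}, ↑U ≤ 𝓝 (0 : Fin (n + 1) → ℝ) →
      (∀ᶠ z in (U : Filter (Fin (n + 1) → ℝ)), z 0 ≠ 0) →
      Tendsto (fun z => monomialFun β (vecTail z) / z 0) U (𝓝 0) → MonomialDivisible U β := by
  induction β using multiIndex_induction with
  | zero =>
    intro U hU h0 hβ
    have hone : Tendsto (fun z : Fin (n + 1) → ℝ => monomialFun 0 (vecTail z) / z 0 * z 0) U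
        (𝓝 1) := by
      refine tendsto_const_nhds.congr' (h0.mono fun z hz => ?_)
      simp [monomialFun_zero_left, hz]
    simpa using tendsto_nhds_unique hone (hβ.mul ((tendsto_coord 0).mono_left hU))
  | single_add i β ih =>
    intro U hU h0 hβ
    rcases tendsto_div_or_tendsto_div_zero U (fun z => z 0) (fun z => vecTail z i) with
      ⟨c, hc, heq⟩ | ⟨hi, -⟩
    · obtain ⟨V, hV⟩ := exists_lift_rescale_zero hU (analyticAt_coord i 0) rfl hc heq
      rcases eq_or_ne c 0 with rfl | hc0
      · have hne := hV.tendsto_ultrafilter.eventually h0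
        refine .of_rescale hV (ih hV.le_nhds (hne.mono fun w hw hw0 => hw (by simp [hw0])) ?_)
        refine (hβ.comp hV.tendsto_ultrafilter).congr' (hne.mono fun w hw => ?_)
        rw [cons_val_zero] at hw
        rw [Function.comp_apply, tail_cons, cons_val_zero, monomialFun_add, monomialFun_single,
          mul_div_mul_left _ _ (left_ne_zero_of_mul hw), zero_add]
      · exact monomialDivisible_of_rescale hc0 hV
    · obtain ⟨V, hV⟩ := exists_lift_rescale_succ hU hi h0
      exact monomialDivisible_of_rescale_succ hV

end BlowUps

section PowersAndProducts

variable {n : ℕ}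

theorem exists_lift_coord_pow {U : Ultrafilter (Fin n → ℝ)} (hU : ↑U ≤ 𝓝 (0 : Fin n → ℝ)) {e : ℕ}
    (he : e ≠ 0) : ∃ (ε : Fin n → ℝ) (V : Ultrafilter (Fin n → ℝ)),
      (∀ i, ε i ≠ 0) ∧ LiftsThrough U (fun w i => ε i * w i ^ e) V := by
  have hsign (i : Fin n) : ∃ ε : ℝ, ε ≠ 0 ∧
      ∀ᶠ x in (U : Filter (Fin n → ℝ)), ε * |x i| = x i := by
    rcases U.em fun x => 0 ≤ x i with h | h
    · exact ⟨1, one_ne_zero, h.mono fun x hx => by rw [abs_of_nonneg hx, one_mul]⟩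
    · refine ⟨-1, neg_ne_zero.2 one_ne_zero, h.mono fun x hx => ?_⟩
      rw [abs_of_neg (not_le.1 hx), neg_one_mul, neg_neg]
  choose ε hε hεx using hsign
  refine ⟨ε, _, hε, .of_section (ψ := fun x i => |x i| ^ (e : ℝ)⁻¹)
    (AnalyticAt.pi fun i => analyticAt_const.fun_mul ((analyticAt_coord i 0).fun_pow e))
    (by ext i; simp [he]) (tendsto_pi_nhds.2 fun i => ?_) ?_⟩
  · have hroot := (((tendsto_coord i).mono_left hU).abs).rpow_const (p := (e : ℝ)⁻¹)
      (.inr (by positivity))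
    simpa [Real.zero_rpow, he] using hroot
  · filter_upwards [eventually_all.2 hεx] with x hx
    ext i
    rw [Real.rpow_inv_natCast_pow (abs_nonneg _) he, hx i]

theorem monomialFun_mul_pow (α : Fin n → ℕ) (ε w : Fin n → ℝ) (e : ℕ) :
    monomialFun α (fun i => ε i * w i ^ e) = monomialFun (e • α) w * monomialFun α ε := by
  simp only [monomialFun, mul_pow, Finset.prod_mul_distrib, ← pow_mul, Pi.smul_apply, smul_eq_mul]
  rw [mul_comm]

theorem HasExponent.comp_coord_pow {f : (Fin n → ℝ) → ℝ} {α : Fin n → ℕ} (hf : HasExponent f α)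
    {ε : Fin n → ℝ} (hε : ∀ i, ε i ≠ 0) {e : ℕ} (he : e ≠ 0) :
    HasExponent (fun w => f fun i => ε i * w i ^ e) (e • α) := by
  obtain ⟨u, hu, hu0, hfu⟩ := hf
  have hχ : AnalyticAt ℝ (fun (w : Fin n → ℝ) i => ε i * w i ^ e) 0 :=
    AnalyticAt.pi fun i => analyticAt_const.fun_mul ((analyticAt_coord i 0).fun_pow e)
  have hχ0 : (fun i => ε i * (0 : Fin n → ℝ) i ^ e) = 0 := by ext i; simp [he]
  refine ⟨fun w => monomialFun α ε * u fun i => ε i * w i ^ e,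
    analyticAt_const.fun_mul (AnalyticAt.fun_comp (g := u) (by rwa [hχ0]) hχ), ?_, ?_⟩
  · beta_reduce
    rw [hχ0]
    exact mul_ne_zero (Finset.prod_ne_zero_iff.2 fun i _ => pow_ne_zero _ (hε i)) hu0
  · filter_upwards [(tendsto_zero_of_analyticAt hχ hχ0).eventually hfu] with w hw
    rw [hw, monomialFun_mul_pow, mul_assoc]

theorem LiftsThrough.exists_vecCons {U : Ultrafilter (Fin (n + 1) → ℝ)}
    {T : Ultrafilter (Fin n → ℝ)} {φ : (Fin n → ℝ) → Fin n → ℝ}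
    (hU : ↑U ≤ 𝓝 (0 : Fin (n + 1) → ℝ)) (hφ : LiftsThrough (U.map vecTail) φ T) :
    ∃ V, LiftsThrough U (fun w => vecCons (w 0) (φ (vecTail w))) V := by
  set Φ : (Fin (n + 1) → ℝ) → Fin (n + 1) → ℝ := fun w => vecCons (w 0) (φ (vecTail w)) with hΦ
  set F : Filter (Fin (n + 1) → ℝ) := comap Φ U ⊓ comap vecTail T
  have hF_neBot : F.NeBot := by
    refine inf_neBot_iff.2 fun s hs t ht => ?_
    obtain ⟨A, hA, hAs⟩ := mem_comap.1 hs
    obtain ⟨B, hB, hBt⟩ := mem_comap.1 ht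
    have hφA : φ ⁻¹' (vecTail '' A) ∈ T := by
      have hA' : vecTail '' A ∈ U.map vecTail := image_mem_map hA
      rwa [← hφ.map_eq] at hA'
    obtain ⟨y, ⟨z, hzA, hzy⟩, hyB⟩ := T.nonempty_of_mem (inter_mem hφA hB)
    refine ⟨vecCons (z 0) y, hAs ?_, hBt (by simpa)⟩
    simpa [hΦ, ← hzy, vecCons_apply_zero_vecTail] using hzA
  have hVU : Tendsto Φ (Ultrafilter.of F) U :=
    tendsto_comap.mono_left ((Ultrafilter.of_le F).trans inf_le_left)
  have hVT : Tendsto vecTail (Ultrafilter.of F) (T : Filter (Fin n → ℝ)) :=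
    tendsto_comap.mono_left ((Ultrafilter.of_le F).trans inf_le_right)
  refine ⟨Ultrafilter.of F, ?_, ?_, ?_, ?_⟩
  · exact analyticAt_vecCons (analyticAt_coord 0 0) (analyticAt_comp_vecTail hφ.analyticAt)
  · simp [hΦ, hφ.map_zero]
  · have h0 : Tendsto (fun w : Fin (n + 1) → ℝ => w 0) (Ultrafilter.of F) (𝓝 0) := by
      simpa [Function.comp_def, hΦ] using (tendsto_coord 0).comp (hVU.mono_right hU)
    refine (tendsto_vecCons h0 (hVT.mono_right hφ.le_nhds)).congr fun w => ?_
    exact vecCons_apply_zero_vecTail w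
  · exact Ultrafilter.coe_le_coe.1 hVU

end PowersAndProducts

section CommonMonomialization

variable {n : ℕ} {U : Ultrafilter (Fin n → ℝ)}

theorem LocallyMonomializable.exists_lift_forall (hn : LocallyMonomializable n)
    (hU : ↑U ≤ 𝓝 (0 : Fin n → ℝ)) {S : Set ((Fin n → ℝ) → ℝ)} (hS : S.Finite)
    (hSa : ∀ f ∈ S, AnalyticAt ℝ f 0) : ∃ φ V, LiftsThrough U φ V ∧
      ∀ f ∈ S, f =ᶠ[𝓝 0] 0 ∨ NormalCrossing fun z : Fin n → ℝ => f (φ z) := by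
  classical
  have hN : {f ∈ S | ¬ f =ᶠ[𝓝 0] 0}.Finite := hS.subset (sep_subset _ _)
  have hNa : ∀ f ∈ hN.toFinset, AnalyticAt ℝ f 0 := fun f hf =>
    hSa f (hN.mem_toFinset.1 hf).1
  obtain ⟨φ, V, hφ, hprod⟩ := hn U hU (fun x => ∏ f ∈ hN.toFinset, f x)
    (hN.toFinset.analyticAt_fun_prod hNa)
    (frequently_prod_ne_zero hN.toFinset hNa fun f hf => not_eventually.1 (hN.mem_toFinset.1 hf).2)
  refine ⟨φ, V, hφ, fun f hf => or_iff_not_imp_left.2 fun hf0 => ?_⟩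
  exact NormalCrossing.of_prod (f := fun f z => f (φ z)) hprod
    (fun g hg => hφ.analyticAt_comp (hNa g hg)) (hN.mem_toFinset.2 ⟨hf, hf0⟩)

variable {κ : Type*} {m : (Fin n → ℝ) → ℝ} {s : Finset κ} {f : κ → (Fin n → ℝ) → ℝ}

theorem LocallyMonomializable.exists_lift_comparable (hn : LocallyMonomializable n)
    (hU : ↑U ≤ 𝓝 (0 : Fin n → ℝ)) (hm : AnalyticAt ℝ m 0) (hm0 : ∃ᶠ x in 𝓝 0, m x ≠ 0)
    (hf : ∀ k ∈ s, AnalyticAt ℝ (f k) 0) (hf0 : ∃ k ∈ s, ∃ᶠ x in 𝓝 0, f k x ≠ 0) (N : κ → ℕ) :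
    ∃ φ V, ∃ α : κ → Fin n → ℕ, ∃ i ∈ s, LiftsThrough U φ V ∧ NormalCrossing (fun z => m (φ z)) ∧
      HasExponent (fun z => f i (φ z)) (α i) ∧ ∀ k ∈ s, (∀ᶠ x in 𝓝 0, f k x = 0) ∨
        HasExponent (fun z => f k (φ z)) (α k) ∧ N i • α i ≤ N k • α k := by
  classical
  have hpow : ∀ k ∈ s, AnalyticAt ℝ (fun x => f k x ^ N k) 0 := fun k hk => (hf k hk).fun_pow _
  set S : Set ((Fin n → ℝ) → ℝ) :=
    insert m (f '' s ∪ image2 (fun k l x => f k x ^ N k - f l x ^ N l) s s) with hS_def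
  have hS : S.Finite :=
    ((s.finite_toSet.image f).union (s.finite_toSet.image2 _ s.finite_toSet)).insert m
  have hSa : ∀ g ∈ S, AnalyticAt ℝ g 0 := by
    rintro g (rfl | ⟨k, hk, rfl⟩ | ⟨k, hk, l, hl, rfl⟩)
    exacts [hm, hf k hk, (hpow k hk).fun_sub (hpow l hl)]
  obtain ⟨φ, V, hφ, hnc⟩ := hn.exists_lift_forall hU hS hSa
  set s' := {k ∈ s | ∃ᶠ x in 𝓝 0, f k x ≠ 0}
  have hexp : ∀ k ∈ s', NormalCrossing fun z => f k (φ z) := fun k hk =>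
    (hnc (f k) (.inr (.inl ⟨k, (Finset.mem_filter.1 hk).1, rfl⟩))).resolve_left
      (not_eventually.2 (Finset.mem_filter.1 hk).2)
  choose! α hα using hexp
  obtain ⟨i, hi, hmin⟩ := s'.exists_minimalFor (fun k => N k • α k)
    (hf0.imp fun k hk => Finset.mem_filter.2 hk)
  refine ⟨φ, V, α, i, (Finset.mem_filter.1 hi).1, hφ,
    (hnc m (.inl rfl)).resolve_left (not_eventually.2 hm0), hα i hi, fun k hk => ?_⟩
  refine or_iff_not_imp_left.2 fun hk0 => ?_
  have hk' : k ∈ s' := Finset.mem_filter.2 ⟨hk, not_eventually.1 hk0⟩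
  have hsub := hnc _ (.inr (.inr ⟨i, (Finset.mem_filter.1 hi).1, k, hk, rfl⟩))
  have hcomparable := ((hα i hi).pow (N i)).le_or_le ((hα k hk').pow (N k)) (hsub.imp_left
    fun h => (hφ.tendsto.eventually h).mono fun z hz => sub_eq_zero.1 hz)
  exact ⟨hα k hk', hcomparable.elim id (hmin hk')⟩

/-- The powers `f k ^ (P / p k)`, with `P = ∏ k ∈ s, p k`, get comparable exponents, and
substituting `P`-th powers of the coordinates makes the least of them divisible by `P`. -/
theorem LocallyMonomializable.exists_lift_weighted (hn : LocallyMonomializable n)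
    (hU : ↑U ≤ 𝓝 (0 : Fin n → ℝ)) (hm : AnalyticAt ℝ m 0) (hm0 : ∃ᶠ x in 𝓝 0, m x ≠ 0)
    (hf : ∀ k ∈ s, AnalyticAt ℝ (f k) 0) (hf0 : ∃ k ∈ s, ∃ᶠ x in 𝓝 0, f k x ≠ 0) {p : κ → ℕ}
    (hp : ∀ k ∈ s, p k ≠ 0) : ∃ φ V, ∃ (β : Fin n → ℕ) (b : κ → (Fin n → ℝ) → ℝ),
      LiftsThrough U φ V ∧ NormalCrossing (fun z => m (φ z)) ∧ (∀ k ∈ s, AnalyticAt ℝ (b k) 0) ∧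
      (∃ i ∈ s, b i 0 ≠ 0) ∧
      ∀ k ∈ s, ∀ᶠ z in 𝓝 0, f k (φ z) = monomialFun β z ^ p k * b k z := by
  classical
  set P := ∏ k ∈ s, p k
  have hP : P ≠ 0 := Finset.prod_ne_zero_iff.2 hp
  obtain ⟨φ, V, α, i, hi, hφ, hmφ, hαi, hα⟩ :=
    hn.exists_lift_comparable hU hm hm0 hf hf0 fun k => P / p k
  obtain ⟨ε, W, hε, hχ⟩ := exists_lift_coord_pow hφ.le_nhds hP
  have hquot : ∀ k ∈ s, ∃ b, AnalyticAt ℝ b 0 ∧ (k = i → b 0 ≠ 0) ∧ ∀ᶠ w in 𝓝 0,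
      f k (φ fun j => ε j * w j ^ P) = monomialFun ((P / p i) • α i) w ^ p k * b w := by
    intro k hk
    rcases hα k hk with hk0 | ⟨hαk, hle⟩
    · refine ⟨0, analyticAt_const, ?_, ?_⟩
      · rintro rfl
        exact absurd (hφ.tendsto.eventually hk0) (not_eventually.2 hαi.frequently_ne_zero)
      · filter_upwards [(hφ.comp hχ).tendsto.eventually hk0] with w hw
        simpa using hw
    · obtain ⟨γ, hγ⟩ := exists_add_of_le hle
      have hexp : P • α k = p k • ((P / p i) • α i) + p k • γ := by
        rw [← smul_add, ← hγ, smul_smul, Nat.mul_div_cancel' (Finset.dvd_prod_of_mem p hk)]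
      obtain ⟨b, hb, hfb⟩ := (hexp ▸ hαk.comp_coord_pow hε hP).exists_eq_monomialFun_mul
      refine ⟨b, hb.analyticAt, ?_, hfb.mono fun w hw => ?_⟩
      · rintro rfl
        obtain rfl : γ = 0 := left_eq_add.1 hγ
        rw [smul_zero] at hb
        exact hb.apply_zero_ne_zero
      · simpa only [monomialFun_smul (p k)] using hw
  choose! b hb hbi hfb using hquot
  refine ⟨_, W, (P / p i) • α i, b, hφ.comp hχ, ?_, hb, ⟨i, hi, hbi i hi rfl⟩, hfb⟩
  exact hmφ.elim fun γ hγ => ⟨_, hγ.comp_coord_pow hε hP⟩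

end CommonMonomialization

section MainInduction

variable {n d : ℕ} {U : Ultrafilter (Fin (n + 1) → ℝ)} {m : (Fin n → ℝ) → ℝ} {β : Fin n → ℕ}
  {b : ℕ → (Fin n → ℝ) → ℝ} {V : (Fin (n + 1) → ℝ) → ℝ}

/-- Monomialization of the functions of order `k` along the first axis, up to a factor that depends
only on the remaining variables. -/
def MonomializableInOrder (n k : ℕ) : Prop :=
  ∀ U : Ultrafilter (Fin (n + 1) → ℝ), ↑U ≤ 𝓝 (0 : Fin (n + 1) → ℝ) →
    ∀ (m : (Fin n → ℝ) → ℝ) (g : (Fin (n + 1) → ℝ) → ℝ), AnalyticAt ℝ m 0 →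
      (∃ᶠ y in 𝓝 0, m y ≠ 0) → AnalyticAt ℝ g 0 → analyticOrderAt (axisRestriction g) 0 = k →
        Monomializable U fun z => m (vecTail z) * g z

/-- The normal form obtained by completing the power and by dividing the coefficients, with their
weights, by the powers of the monomial `x ^ β`. -/
noncomputable def preparedForm (β : Fin n → ℕ) (d : ℕ) (b : ℕ → (Fin n → ℝ) → ℝ)
    (V : (Fin (n + 1) → ℝ) → ℝ) (z : Fin (n + 1) → ℝ) : ℝ :=
  ∑ j ∈ Finset.range d, monomialFun β (vecTail z) ^ (d + 1 - j) * b j (vecTail z) * z 0 ^ j +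
    z 0 ^ (d + 1) * V z

theorem LocallyMonomializable.monomializable_mul_pow_mul (hn : LocallyMonomializable n)
    (hU : ↑U ≤ 𝓝 (0 : Fin (n + 1) → ℝ)) (hm : AnalyticAt ℝ m 0) (hm0 : ∃ᶠ y in 𝓝 0, m y ≠ 0)
    (hV : AnalyticAt ℝ V 0) (hV0 : V 0 ≠ 0) (k : ℕ) :
    Monomializable U fun z => m (vecTail z) * (z 0 ^ k * V z) := by
  obtain ⟨φ, T, hφ, hmφ⟩ := hn (U.map vecTail) (tendsto_vecTail.mono_left hU) m hm hm0
  obtain ⟨W, hW⟩ := hφ.exists_vecCons hU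
  refine ⟨_, W, hW, ?_⟩
  have hunit := NormalCrossing.of_ne_zero (hW.analyticAt_comp hV) (by rwa [hW.map_zero])
  simpa using hmφ.comp_vecTail.mul (((NormalCrossing.coord 0).pow k).mul hunit)

theorem preparedForm_of_monomialFun_eq {z : Fin (n + 1) → ℝ} {ν : ℝ}
    (hν : monomialFun β (vecTail z) = z 0 * ν) : preparedForm β d b V z =
      z 0 ^ (d + 1) * (∑ j ∈ Finset.range d, ν ^ (d + 1 - j) * b j (vecTail z) + V z) := by
  rw [preparedForm, mul_add, Finset.mul_sum, hν]
  congr 1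
  refine Finset.sum_congr rfl fun j hj => ?_
  rw [← Nat.sub_add_cancel (show j ≤ d + 1 by have := Finset.mem_range.1 hj; omega)]
  simp only [Nat.add_sub_cancel]
  ring

theorem preparedForm_of_apply_zero_eq {z : Fin (n + 1) → ℝ} {s : ℝ}
    (hs : z 0 = monomialFun β (vecTail z) * s) : preparedForm β d b V z =
      monomialFun β (vecTail z) ^ (d + 1) *
        (∑ j ∈ Finset.range d, b j (vecTail z) * s ^ j + V z * s ^ (d + 1)) := by
  rw [preparedForm, mul_add, Finset.mul_sum, hs]
  congr 1
  · refine Finset.sum_congr rfl fun j hj => ?_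
    rw [← Nat.sub_add_cancel (show j ≤ d + 1 by have := Finset.mem_range.1 hj; omega)]
    simp only [Nat.add_sub_cancel]
    ring
  · ring

theorem monomializable_preparedForm_of_tendsto_zero (hU : ↑U ≤ 𝓝 (0 : Fin (n + 1) → ℝ))
    (hm : NormalCrossing m) (hb : ∀ j ∈ Finset.range d, AnalyticAt ℝ (b j) 0)
    (hV : AnalyticAt ℝ V 0) (hV0 : V 0 ≠ 0)
    (h0 : ∀ᶠ z in (U : Filter (Fin (n + 1) → ℝ)), z 0 ≠ 0)
    (hβ : Tendsto (fun z => monomialFun β (vecTail z) / z 0) U (𝓝 0)) :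
    Monomializable U fun z => m (vecTail z) * preparedForm β d b V z := by
  obtain ⟨φ, W, ν, hφ, hcoord, hν, hdvd⟩ := monomialDivisible_of_tendsto β hU h0 hβ
  have hν0 : ν 0 = 0 := hφ.apply_zero_eq_of_tendsto_div hν.continuousAt hβ h0 hdvd
  refine ⟨φ, W, hφ, ?_⟩
  have hmφ : NormalCrossing fun w => m (vecTail (φ w)) :=
    hm.comp_vecTail.comp hφ.analyticAt hφ.map_zero hcoord
  have hunit : NormalCrossing fun w =>
      ∑ j ∈ Finset.range d, ν w ^ (d + 1 - j) * b j (vecTail (φ w)) + V (φ w) := by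
    refine .of_ne_zero (((Finset.range d).analyticAt_fun_sum fun j hj => ?_).fun_add
      (hφ.analyticAt_comp hV)) ?_
    · exact (hν.fun_pow _).fun_mul (hφ.analyticAt_comp (analyticAt_comp_vecTail (hb j hj)))
    · rw [hφ.map_zero, hν0, Finset.sum_eq_zero fun j hj => ?_, zero_add]
      · exact hV0
      · rw [zero_pow (by have := Finset.mem_range.1 hj; omega), zero_mul]
  refine (hmφ.mul (((hcoord 0).pow (d + 1)).mul hunit)).congr ?_
  filter_upwards [hdvd] with w hw
  rw [preparedForm_of_monomialFun_eq hw]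

theorem monomializable_preparedForm_of_tendsto
    (ih : ∀ k < d + 1, MonomializableInOrder n k) (hU : ↑U ≤ 𝓝 (0 : Fin (n + 1) → ℝ))
    (hm : NormalCrossing m) (hβ0 : β ≠ 0) (hb : ∀ j ∈ Finset.range d, AnalyticAt ℝ (b j) 0)
    (hb0 : ∃ i ∈ Finset.range d, b i 0 ≠ 0) (hV : AnalyticAt ℝ V 0) (hV0 : V 0 ≠ 0) {c : ℝ}
    (hc : Tendsto (fun z => z 0 / monomialFun β (vecTail z)) U (𝓝 c))
    (heq : ∀ᶠ z in (U : Filter (Fin (n + 1) → ℝ)),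
      monomialFun β (vecTail z) * (z 0 / monomialFun β (vecTail z)) = z 0) :
    Monomializable U fun z => m (vecTail z) * preparedForm β d b V z := by
  obtain ⟨W, hW⟩ := exists_lift_rescale_zero hU (analyticAt_monomialFun β 0)
    ((HasExponent.monomial β).apply_zero hβ0) hc heq
  set φ : (Fin (n + 1) → ℝ) → Fin (n + 1) → ℝ :=
    fun w => vecCons (monomialFun β (vecTail w) * (c + w 0)) (vecTail w) with hφ_def
  set p : (Fin (n + 1) → ℝ) → ℝ := fun w =>
    ∑ j ∈ Finset.range d, b j (vecTail w) * (c + w 0) ^ j + V (φ w) * (c + w 0) ^ (d + 1)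
    with hp_def
  have hlin : AnalyticAt ℝ (fun w : Fin (n + 1) → ℝ => c + w 0) 0 :=
    analyticAt_const.fun_add (analyticAt_coord 0 0)
  have hp : AnalyticAt ℝ p 0 := ((Finset.range d).analyticAt_fun_sum fun j hj =>
    (analyticAt_comp_vecTail (hb j hj)).fun_mul (hlin.fun_pow j)).fun_add
      ((hW.analyticAt_comp hV).fun_mul (hlin.fun_pow (d + 1)))
  have hmβ : NormalCrossing fun y => m y * monomialFun β y ^ (d + 1) :=
    hm.mul (.pow ⟨β, .monomial β⟩ (d + 1))
  have hpaxis : axisRestriction p =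
      fun t => ∑ j ∈ Finset.range d, b j 0 * (c + t) ^ j + V 0 * (c + t) ^ (d + 1) := by
    ext t
    simp [axisRestriction, hp_def, hφ_def, (HasExponent.monomial β).apply_zero hβ0]
  obtain ⟨i, hi, hbi⟩ := hb0
  have hlt := analyticOrderAt_sum_const_add_pow_lt (b := fun j => b j 0)
    (Finset.mem_range.1 hi) hbi hV0 c
  rw [← hpaxis] at hlt
  obtain ⟨k, hk⟩ := ENat.ne_top_iff_exists.1 hlt.ne_top
  rw [← hk] at hlt
  refine .of_lift hW (.of_forall fun w => ?_) (ih k (by exact_mod_cast hlt) W hW.le_nhds _ p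
    hmβ.analyticAt hmβ.frequently_ne_zero hp hk.symm)
  beta_reduce
  rw [preparedForm_of_apply_zero_eq (s := c + w 0) (by simp [hφ_def])]
  simp [hφ_def, hp_def, mul_assoc]

theorem monomializable_preparedForm (ih : ∀ k < d + 1, MonomializableInOrder n k)
    (hU : ↑U ≤ 𝓝 (0 : Fin (n + 1) → ℝ)) (hm : NormalCrossing m) (hβ0 : β ≠ 0)
    (hb : ∀ j ∈ Finset.range d, AnalyticAt ℝ (b j) 0) (hb0 : ∃ i ∈ Finset.range d, b i 0 ≠ 0)
    (hV : AnalyticAt ℝ V 0) (hV0 : V 0 ≠ 0) :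
    Monomializable U fun z => m (vecTail z) * preparedForm β d b V z := by
  rcases tendsto_div_or_tendsto_div_zero U (fun z => z 0) (fun z => monomialFun β (vecTail z)) with
    ⟨c, hc, heq⟩ | ⟨hβ, h0⟩
  · exact monomializable_preparedForm_of_tendsto ih hU hm hβ0 hb hb0 hV hV0 hc heq
  · exact monomializable_preparedForm_of_tendsto_zero hU hm hb hV hV0 h0 hβ

theorem LocallyMonomializable.monomializable_mul_sum_mul_pow_add (hn : LocallyMonomializable n)
    (ih : ∀ k < d + 1, MonomializableInOrder n k) (hU : ↑U ≤ 𝓝 (0 : Fin (n + 1) → ℝ))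
    (hm : AnalyticAt ℝ m 0) (hm0 : ∃ᶠ y in 𝓝 0, m y ≠ 0) {a : ℕ → (Fin n → ℝ) → ℝ}
    (ha : ∀ j, AnalyticAt ℝ (a j) 0) (ha0 : ∀ j < d, a j 0 = 0) (hV : AnalyticAt ℝ V 0)
    (hV0 : V 0 ≠ 0) : Monomializable U fun z => m (vecTail z) *
      (∑ j ∈ Finset.range d, a j (vecTail z) * z 0 ^ j + z 0 ^ (d + 1) * V z) := by
  by_cases hne : ∃ j ∈ Finset.range d, ∃ᶠ y in 𝓝 0, a j y ≠ 0
  · obtain ⟨φ, T, β, b, hφ, hmφ, hb, ⟨i, hi, hbi⟩, hab⟩ := hn.exists_lift_weighted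
      (U := U.map vecTail) (tendsto_vecTail.mono_left hU) hm hm0 (fun j _ => ha j) hne
      (p := fun j => d + 1 - j) fun j hj => by have := Finset.mem_range.1 hj; omega
    have hβ0 : β ≠ 0 := by
      rintro rfl
      have h := (hab i hi).self_of_nhds
      rw [hφ.map_zero, ha0 i (Finset.mem_range.1 hi), monomialFun_zero_left, one_pow, one_mul] at h
      exact hbi h.symm
    obtain ⟨W, hW⟩ := hφ.exists_vecCons hU
    refine .of_lift hW ?_ (monomializable_preparedForm ih hW.le_nhds hmφ hβ0 hb ⟨i, hi, hbi⟩
      (hW.analyticAt_comp hV) (by rwa [hW.map_zero]))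
    filter_upwards [tendsto_vecTail.eventually ((Finset.eventually_all _).2 hab)] with w hw
    simp only [tail_cons, cons_val_zero, preparedForm]
    congr 2
    exact Finset.sum_congr rfl fun j hj => by rw [hw j hj]
  · push Not at hne
    refine .congr hU ?_ (hn.monomializable_mul_pow_mul hU hm hm0 hV hV0 (d + 1))
    filter_upwards [tendsto_vecTail.eventually ((Finset.eventually_all _).2 hne)] with z hz
    rw [Finset.sum_eq_zero fun j hj => by rw [hz j hj, zero_mul], zero_add]

theorem exists_lift_translate (hU : ↑U ≤ 𝓝 (0 : Fin (n + 1) → ℝ)) {θ : (Fin n → ℝ) → ℝ}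
    (hθ : AnalyticAt ℝ θ 0) (hθ0 : θ 0 = 0) :
    ∃ W, LiftsThrough U (fun z => vecCons (z 0 + θ (vecTail z)) (vecTail z)) W := by
  have hθt : Tendsto (fun z => θ (vecTail z)) U (𝓝 0) :=
    ((tendsto_zero_of_analyticAt hθ hθ0).comp tendsto_vecTail).mono_left hU
  refine ⟨_, .of_section (ψ := fun z => vecCons (z 0 - θ (vecTail z)) (vecTail z))
    (analyticAt_vecCons ((analyticAt_coord 0 0).fun_add (analyticAt_comp_vecTail hθ))
      (analyticAt_vecTail 0)) (by simp [hθ0])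
    (tendsto_vecCons ?_ (tendsto_vecTail.mono_left hU)) (.of_forall fun z => ?_)⟩
  · simpa using ((tendsto_coord 0).mono_left hU).sub hθt
  · simp [vecCons_apply_zero_vecTail]

theorem LocallyMonomializable.monomializableInOrder (hn : LocallyMonomializable n) (k : ℕ) :
    MonomializableInOrder n k := by
  induction k using Nat.strong_induction_on with
  | _ k ih =>
    intro U hU m g hm hm0 hg hord
    cases k with
    | zero =>
      have hg0 : g 0 ≠ 0 := by
        have h := (analyticAt_axisRestriction hg).analyticOrderAt_eq_zero.1 hord
        simpa [axisRestriction] using h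
      simpa using hn.monomializable_mul_pow_mul hU hm hm0 hg hg0 0
    | succ d =>
      obtain ⟨θ, a, V, hθ, hθ0, ha, ha0, hV, hV0, hga⟩ := exists_tschirnhaus hg hord
      obtain ⟨W, hW⟩ := exists_lift_translate hU hθ hθ0
      refine .of_lift hW ?_ (hn.monomializable_mul_sum_mul_pow_add ih hW.le_nhds hm hm0 ha ha0
        hV hV0)
      filter_upwards [hga] with z hz
      rw [hz, tail_cons]

theorem exists_continuousLinearEquiv_vecCons {v : Fin (n + 1) → ℝ} (hv : v ≠ 0) :
    ∃ L : (Fin (n + 1) → ℝ) ≃L[ℝ] (Fin (n + 1) → ℝ), ∀ t : ℝ, L (vecCons t 0) = t • v := by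
  obtain ⟨L, hL⟩ := SeparatingDual.exists_continuousLinearEquiv_apply_eq (R := ℝ)
    (x := (vecCons 1 0 : Fin (n + 1) → ℝ)) (y := v) (fun h => one_ne_zero (congrFun h 0)) hv
  refine ⟨L, fun t => ?_⟩
  rw [← hL, ← map_smul, smul_cons, smul_zero, smul_eq_mul, mul_one]

theorem exists_lift_axisRestriction_ne_zero (hU : ↑U ≤ 𝓝 (0 : Fin (n + 1) → ℝ))
    {f : (Fin (n + 1) → ℝ) → ℝ} (hf : AnalyticAt ℝ f 0) (hf0 : ∃ᶠ x in 𝓝 0, f x ≠ 0) :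
    ∃ (φ : (Fin (n + 1) → ℝ) → Fin (n + 1) → ℝ) (W : Ultrafilter (Fin (n + 1) → ℝ)),
      LiftsThrough U φ W ∧ ∃ᶠ t in 𝓝 0, axisRestriction (fun z => f (φ z)) t ≠ 0 := by
  by_cases hf00 : f 0 = 0
  swap
  · exact ⟨id, U, .refl hU, ((analyticAt_axisRestriction hf).continuousAt.eventually_ne
      (by simpa [axisRestriction] using hf00)).frequently⟩
  obtain ⟨v, hv⟩ := exists_direction_frequently_ne_zero hf hf0
  have hv0 : v ≠ 0 := by
    rintro rfl
    simp [hf00] at hv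
  obtain ⟨L, hL⟩ := exists_continuousLinearEquiv_vecCons hv0
  refine ⟨L, _, .of_section (ψ := L.symm) (L.toContinuousLinearMap.analyticAt 0) (map_zero L)
    ((map_zero L.symm ▸ L.symm.continuous.tendsto 0).mono_left hU)
    (.of_forall L.apply_symm_apply), ?_⟩
  simpa only [axisRestriction, hL] using hv

theorem locallyMonomializable (n : ℕ) : LocallyMonomializable n := by
  induction n with
  | zero =>
    intro U hU f hf hf0
    obtain ⟨x, hx⟩ := hf0.exists
    exact ⟨id, U, .refl hU, .of_ne_zero hf (Subsingleton.elim x 0 ▸ hx)⟩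
  | succ n hn =>
    intro U hU f hf hf0
    obtain ⟨φ, W, hφ, hne⟩ := exists_lift_axisRestriction_ne_zero hU hf hf0
    have hord : analyticOrderAt (axisRestriction fun z => f (φ z)) 0 ≠ ⊤ :=
      fun htop => not_eventually.2 hne (analyticOrderAt_eq_top.1 htop)
    obtain ⟨k, hk⟩ := ENat.ne_top_iff_exists.1 hord
    have hmono := hn.monomializableInOrder k W hφ.le_nhds (fun _ => 1) _ analyticAt_const
      (by simp) (hφ.analyticAt_comp hf) hk.symm
    exact .of_lift hφ .rfl (by simpa using hmono)

end MainInduction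

section MonomialGradient

variable {ι : Type*} [Fintype ι] {f : (ι → ℝ) → ℝ} {α : ι → ℕ}

theorem monomialFun_add_smul_single [DecidableEq ι] (α : ι → ℕ) (z : ι → ℝ) (i : ι)
    (s : ℝ) : monomialFun α (z + s • z i • Pi.single i 1) = (1 + s) ^ α i * monomialFun α z := by
  rw [monomialFun, monomialFun, ← Finset.mul_prod_erase _ _ (Finset.mem_univ i),
    ← Finset.mul_prod_erase Finset.univ (fun j => z j ^ α j) (Finset.mem_univ i), ← mul_assoc,
    ← mul_pow]
  congr 1
  · simp [add_mul, one_mul]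
  · refine Finset.prod_congr rfl fun j hj => ?_
    simp [Finset.ne_of_mem_erase hj]

theorem fderiv_monomialFun_smul_single [DecidableEq ι] (α : ι → ℕ) (z : ι → ℝ) (i : ι) :
    fderiv ℝ (monomialFun α) z (z i • Pi.single i 1) = α i * monomialFun α z := by
  have hline : HasLineDerivAt ℝ (monomialFun α) (α i * monomialFun α z) z
      (z i • Pi.single i 1) := by
    simp only [HasLineDerivAt, monomialFun_add_smul_single]
    simpa using (((hasDerivAt_id (0 : ℝ)).const_add 1).fun_pow (α i)).mul_const (monomialFun α z)
  exact (((analyticAt_monomialFun α z).differentiableAt.hasFDerivAt).hasLineDerivAt _).unique hline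

theorem HasExponent.eventually_abs_le_norm_fderiv (hf : HasExponent f α) :
    ∀ᶠ z in 𝓝 0, ∀ i, α i ≠ 0 → |f z| ≤ 2 * (|z i| * ‖fderiv ℝ f z‖) := by
  classical
  obtain ⟨u, hu, hu0, hfu⟩ := hf
  refine eventually_all.2 fun i => ?_
  by_cases hi : α i = 0
  · simp [hi]
  set E : (ι → ℝ) → ℝ := fun z => α i * u z + fderiv ℝ u z (z i • Pi.single i 1) with hE_def
  have hE : ContinuousAt E 0 := (continuousAt_const.mul hu.continuousAt).add
    (hu.fderiv.continuousAt.clm_apply ((analyticAt_coord i 0).continuousAt.smul continuousAt_const))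
  have huE0 : |u 0| < 2 * |E 0| := by
    have hi1 : (1 : ℝ) ≤ α i := by exact_mod_cast Nat.one_le_iff_ne_zero.2 hi
    have hu0' := abs_pos.2 hu0
    simp only [hE_def, Pi.zero_apply, zero_smul, map_zero, add_zero, abs_mul, Nat.abs_cast]
    nlinarith
  filter_upwards [hfu, hfu.eventuallyEq_nhds, hu.eventually_analyticAt,
    hu.continuousAt.abs.eventually_lt (continuousAt_const.mul hE.abs) huE0] with z hz hfz hu_z huE _
  have heuler : fderiv ℝ f z (z i • Pi.single i 1) = monomialFun α z * E z := by
    rw [hfz.fderiv_eq, fderiv_fun_mul (analyticAt_monomialFun α z).differentiableAt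
      hu_z.differentiableAt]
    simp only [_root_.add_apply, _root_.smul_apply, fderiv_monomialFun_smul_single, smul_eq_mul,
      hE_def]
    ring
  calc |f z| ≤ |monomialFun α z| * (2 * |E z|) := by rw [hz, abs_mul]; gcongr; exact huE.le
    _ = 2 * ‖fderiv ℝ f z (z i • Pi.single i 1)‖ := by
      rw [heuler, Real.norm_eq_abs, abs_mul]; ring
    _ ≤ 2 * (|z i| * ‖fderiv ℝ f z‖) := by
      gcongr
      refine (ContinuousLinearMap.le_opNorm _ _).trans_eq ?_
      rw [norm_smul, Pi.norm_single, norm_one, mul_one, Real.norm_eq_abs, mul_comm]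

theorem exists_abs_pow_le_abs_monomialFun (hα : α ≠ 0) (z : ι → ℝ) :
    ∃ i, α i ≠ 0 ∧ |z i| ^ ∑ j, α j ≤ |monomialFun α z| := by
  obtain ⟨i, hi, hmin⟩ := (Finset.univ.filter fun i => α i ≠ 0).exists_min_image (|z ·|) <|
    (Function.ne_iff.1 hα).imp fun i hi => by simpa using hi
  refine ⟨i, (Finset.mem_filter.1 hi).2, ?_⟩
  rw [monomialFun, Finset.abs_prod, ← Finset.prod_pow_eq_pow_sum]
  refine Finset.prod_le_prod (fun _ _ => by positivity) fun j _ => ?_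
  rw [abs_pow]
  by_cases hj : α j = 0
  · simp [hj]
  · exact pow_le_pow_left₀ (abs_nonneg _) (hmin j (by simpa using hj)) _

theorem HasExponent.exists_eventually_abs_monomialFun_le (hf : HasExponent f α) :
    ∃ C > 0, ∀ᶠ z in 𝓝 0, |monomialFun α z| ≤ C * |f z| := by
  obtain ⟨u, hu, hu0, hfu⟩ := hf
  refine ⟨2 / |u 0|, by positivity, ?_⟩
  filter_upwards [hfu, hu.continuousAt.abs.eventually_const_lt (half_lt_self (abs_pos.2 hu0))]
    with z hz huz
  rw [hz, abs_mul, mul_left_comm]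
  refine le_mul_of_one_le_right (abs_nonneg _) ?_
  rw [div_mul_eq_mul_div, one_le_div (abs_pos.2 hu0)]
  linarith

theorem HasExponent.exists_eventually_abs_rpow_le (hf : HasExponent f α) (hα : α ≠ 0) :
    ∃ C > 0, ∀ᶠ z in 𝓝 0, f z ≠ 0 →
      |f z| ^ (1 - 1 / ((∑ i, α i : ℕ) : ℝ)) ≤ C * ‖fderiv ℝ f z‖ := by
  set t := ∑ i, α i
  have ht : t ≠ 0 := fun h => hα (funext fun i => Finset.sum_eq_zero_iff.1 h i (Finset.mem_univ i))
  obtain ⟨C, hC, hCf⟩ := hf.exists_eventually_abs_monomialFun_le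
  refine ⟨2 * C ^ (1 / (t : ℝ)), by positivity, ?_⟩
  filter_upwards [hCf, hf.eventually_abs_le_norm_fderiv] with z hMz hgrad hz
  obtain ⟨i, hi, hiz⟩ := exists_abs_pow_le_abs_monomialFun hα z
  have hfz : 0 < |f z| := abs_pos.2 hz
  have hcoord : |z i| ≤ C ^ (1 / (t : ℝ)) * |f z| ^ (1 / (t : ℝ)) := by
    rw [← Real.mul_rpow hC.le hfz.le, one_div,
      Real.le_rpow_inv_iff_of_pos (abs_nonneg _) (by positivity) (by positivity),
      Real.rpow_natCast]
    exact hiz.trans hMz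
  rw [Real.rpow_sub hfz, Real.rpow_one, div_le_iff₀ (by positivity)]
  calc |f z| ≤ 2 * (|z i| * ‖fderiv ℝ f z‖) := hgrad i hi
    _ ≤ 2 * (C ^ (1 / (t : ℝ)) * |f z| ^ (1 / (t : ℝ)) * ‖fderiv ℝ f z‖) := by gcongr
    _ = _ := by ring

end MonomialGradient

section GradientInequality

theorem exists_eventually_of_forall_ultrafilter {α : Type*} {l : Filter α} {p : ℕ → α → Prop}
    (hp : ∀ᶠ x in l, Monotone (p · x))
    (h : ∀ U : Ultrafilter α, ↑U ≤ l → ∃ k, ∀ᶠ x in (U : Filter α), p k x) :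
    ∃ k, ∀ᶠ x in l, p k x := by
  by_contra! hfreq
  have hanti : Antitone fun k => l ⊓ 𝓟 {x | ¬ p k x} := fun j k hjk =>
    le_inf inf_le_left <| le_principal_iff.2 <| mem_inf_principal.2 <|
      hp.mono fun x hx hk hj => hk (hx hjk hj)
  have hne : (⨅ k, l ⊓ 𝓟 {x | ¬ p k x}).NeBot :=
    iInf_neBot_of_directed' hanti.directed_ge fun k => frequently_iff_neBot.1 (hfreq k)
  obtain ⟨U, hU⟩ := Ultrafilter.exists_le (⨅ k, l ⊓ 𝓟 {x | ¬ p k x})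
  have hU' (k : ℕ) : ↑U ≤ l ⊓ 𝓟 {x | ¬ p k x} := hU.trans (iInf_le _ k)
  obtain ⟨k, hk⟩ := h U ((hU' 0).trans inf_le_left)
  exact Ultrafilter.eventually_not.1 (le_principal_iff.1 ((hU' k).trans inf_le_right)) hk

theorem LiftsThrough.exists_eventually_norm_fderiv_comp_le {E E' : Type*} [NormedAddCommGroup E]
    [NormedSpace ℝ E] [NormedAddCommGroup E'] [NormedSpace ℝ E'] [CompleteSpace E]
    {U : Ultrafilter E} {φ : E' → E} {V : Ultrafilter E'} (hφ : LiftsThrough U φ V) {f : E → ℝ}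
    (hf : AnalyticAt ℝ f 0) :
    ∃ B > 0, ∀ᶠ z in 𝓝 0, ‖fderiv ℝ (fun z => f (φ z)) z‖ ≤ B * ‖fderiv ℝ f (φ z)‖ := by
  refine ⟨‖fderiv ℝ φ 0‖ + 1, by positivity, ?_⟩
  filter_upwards [hφ.analyticAt.eventually_analyticAt,
    hφ.tendsto.eventually hf.eventually_analyticAt,
    hφ.analyticAt.fderiv.continuousAt.norm.eventually_lt_const (lt_add_one _)] with z hφz hfz hB
  rw [fderiv_fun_comp z hfz.differentiableAt hφz.differentiableAt, mul_comm]
  exact (ContinuousLinearMap.opNorm_comp_le _ _).trans (by gcongr)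

theorem Monomializable.exists_eventually_abs_rpow_le {n : ℕ} {U : Ultrafilter (Fin n → ℝ)}
    {f : (Fin n → ℝ) → ℝ} (h : Monomializable U f) (hf : AnalyticAt ℝ f 0) (hf0 : f 0 = 0) :
    ∃ t : ℕ, ∃ C > 0, t ≠ 0 ∧ ∀ᶠ x in (U : Filter (Fin n → ℝ)), f x ≠ 0 →
      |f x| ^ (1 - 1 / (t : ℝ)) ≤ C * ‖fderiv ℝ f x‖ := by
  obtain ⟨φ, V, hφ, α, hα⟩ := h
  have hα0 : α ≠ 0 := by
    rintro rfl
    exact hα.apply_zero_ne_zero (by rw [hφ.map_zero, hf0])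
  obtain ⟨C, hC, hgrad⟩ := hα.exists_eventually_abs_rpow_le hα0
  obtain ⟨B, hB, hchain⟩ := hφ.exists_eventually_norm_fderiv_comp_le hf
  refine ⟨∑ i, α i, C * B, by positivity, fun h0 => hα0 (funext fun i =>
    Finset.sum_eq_zero_iff.1 h0 i (Finset.mem_univ i)), ?_⟩
  rw [← hφ.map_eq, Ultrafilter.coe_map, eventually_map]
  filter_upwards [hφ.le_nhds hgrad, hφ.le_nhds hchain] with z hz hchain_z hne
  calc _ ≤ C * ‖fderiv ℝ (fun z => f (φ z)) z‖ := hz hne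
    _ ≤ C * (B * ‖fderiv ℝ f (φ z)‖) := by gcongr
    _ = _ := by ring

theorem monotone_abs_rpow_le {a D : ℝ} (ha : |a| ≤ 1) (hD : 0 ≤ D) :
    Monotone fun k : ℕ => |a| ^ (1 - 1 / ((k : ℝ) + 2)) ≤ ((k : ℝ) + 2) * D := by
  intro j k hjk hj
  have hjk' : (j : ℝ) ≤ k := by exact_mod_cast hjk
  calc |a| ^ (1 - 1 / ((k : ℝ) + 2)) ≤ |a| ^ (1 - 1 / ((j : ℝ) + 2)) := by
        refine Real.rpow_le_rpow_of_exponent_ge' (abs_nonneg a) ha ?_ (by gcongr)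
        rw [sub_nonneg, div_le_one (by positivity)]
        linarith [j.cast_nonneg (α := ℝ)]
    _ ≤ ((j : ℝ) + 2) * D := hj
    _ ≤ ((k : ℝ) + 2) * D := by gcongr

theorem exists_eventually_abs_rpow_le_norm_fderiv {n : ℕ} {f : (Fin n → ℝ) → ℝ}
    (hf : AnalyticAt ℝ f 0) (hf0 : f 0 = 0) :
    ∃ k : ℕ, ∀ᶠ x in 𝓝 0, |f x| ^ (1 - 1 / ((k : ℝ) + 2)) ≤ ((k : ℝ) + 2) * ‖fderiv ℝ f x‖ := by
  have hsmall : ∀ᶠ x in 𝓝 0, |f x| ≤ 1 :=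
    (hf.continuousAt.abs.eventually_lt_const (by simp [hf0])).mono fun _ => le_of_lt
  refine exists_eventually_of_forall_ultrafilter
    (hsmall.mono fun x hx => monotone_abs_rpow_le hx (norm_nonneg _)) fun U hU => ?_
  have hzero (k : ℕ) {x : Fin n → ℝ} (hx : f x = 0) :
      |f x| ^ (1 - 1 / ((k : ℝ) + 2)) ≤ ((k : ℝ) + 2) * ‖fderiv ℝ f x‖ := by
    have hexp : 1 - 1 / ((k : ℝ) + 2) ≠ 0 := by
      rw [sub_ne_zero, ne_comm, ne_eq, div_eq_one_iff_eq (by positivity)]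
      linarith [k.cast_nonneg (α := ℝ)]
    rw [hx, abs_zero, Real.zero_rpow hexp]
    positivity
  by_cases hne : ∃ᶠ x in 𝓝 0, f x ≠ 0
  swap
  · push Not at hne
    exact ⟨0, Eventually.mono (hU hne) fun x hx => hzero 0 hx⟩
  obtain ⟨t, C, -, ht, htC⟩ :=
    (locallyMonomializable n U hU f hf hne).exists_eventually_abs_rpow_le hf hf0
  refine ⟨max t ⌈C⌉₊, ?_⟩
  filter_upwards [htC, hU hsmall] with x hx hx1
  by_cases hfx : f x = 0
  · exact hzero _ hfx
  have ht' : (t : ℝ) ≤ (max t ⌈C⌉₊ : ℕ) + 2 := by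
    exact_mod_cast (le_max_left _ _).trans (Nat.le_add_right _ 2)
  have hC' : C ≤ (max t ⌈C⌉₊ : ℕ) + 2 := (Nat.le_ceil C).trans <| by
    exact_mod_cast (le_max_right _ _).trans (Nat.le_add_right _ 2)
  calc _ ≤ |f x| ^ (1 - 1 / (t : ℝ)) :=
        Real.rpow_le_rpow_of_exponent_ge (abs_pos.2 hfx) hx1 (by gcongr)
    _ ≤ C * ‖fderiv ℝ f x‖ := hx hfx
    _ ≤ _ := by gcongr

theorem exists_eventually_abs_sub_rpow_le_norm_fderiv {E : Type*} [NormedAddCommGroup E]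
    [NormedSpace ℝ E] [FiniteDimensional ℝ E] {F : E → ℝ} {p : E} (hF : AnalyticAt ℝ F p) :
    ∃ ζ ∈ Ioc (0 : ℝ) (1 / 2), ∃ C > 0, ∀ᶠ x in 𝓝 p,
      |F x - F p| ^ (1 - ζ) ≤ C * ‖fderiv ℝ F x‖ := by
  let L : (Fin (Module.finrank ℝ E) → ℝ) ≃L[ℝ] E := .ofFinrankEq (by simp)
  have hL : AnalyticAt ℝ (fun y => p + L y) 0 :=
    analyticAt_const.fun_add (L.toContinuousLinearMap.analyticAt 0)
  have hG : AnalyticAt ℝ (fun y => F (p + L y) - F p) 0 :=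
    (AnalyticAt.fun_comp (by simpa using hF) hL).fun_sub analyticAt_const
  obtain ⟨k, hk⟩ := exists_eventually_abs_rpow_le_norm_fderiv hG (by simp)
  have hsymm : Tendsto (fun x => L.symm (x - p)) (𝓝 p) (𝓝 0) := by
    have hcont : Continuous fun x => L.symm (x - p) := by fun_prop
    simpa using hcont.tendsto p
  have hnorm (x : E) : ‖fderiv ℝ (fun y => F (p + L y) - F p) (L.symm (x - p))‖ ≤
      ‖fderiv ℝ F x‖ * ‖L.toContinuousLinearMap‖ := by
    rw [fderiv_sub_const]
    change ‖fderiv ℝ ((fun y => F (p + y)) ∘ L) _‖ ≤ _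
    rw [L.comp_right_fderiv, fderiv_comp_add_left]
    simpa using ContinuousLinearMap.opNorm_comp_le (fderiv ℝ F x) L.toContinuousLinearMap
  refine ⟨1 / ((k : ℝ) + 2), ⟨by positivity, ?_⟩, ((k : ℝ) + 2) *
    (‖L.toContinuousLinearMap‖ + 1), by positivity, ?_⟩
  · exact one_div_le_one_div_of_le two_pos (by linarith [k.cast_nonneg (α := ℝ)])
  · filter_upwards [hsymm.eventually hk] with x hx
    rw [L.apply_symm_apply, add_sub_cancel] at hx
    refine hx.trans ?_
    rw [mul_assoc, mul_comm (_ + 1)]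
    gcongr
    exact (hnorm x).trans (by gcongr; exact le_add_of_nonneg_right zero_le_one)

end GradientInequality

section Orthogonal

variable {n : ℕ}

theorem abs_apply_le_frobR (A : Matrix (Fin n) (Fin n) ℝ) (i j : Fin n) : |A i j| ≤ frobR A := by
  rw [frobR, ← Fintype.sum_prod_type']
  exact Real.abs_le_sqrt (Finset.single_le_sum (f := fun p : Fin n × Fin n => A p.1 p.2 ^ 2)
    (fun _ _ => sq_nonneg _) (Finset.mem_univ (i, j)))

theorem dist_le_frobR_sub (x y : Fin n → Fin n → ℝ) : dist x y ≤ frobR (of x - of y) :=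
  (dist_pi_le_iff (Real.sqrt_nonneg _)).2 fun i => (dist_pi_le_iff (Real.sqrt_nonneg _)).2
    fun j => abs_apply_le_frobR (of x - of y) i j

theorem abs_sum_sum_mul_le (A : Matrix (Fin n) (Fin n) ℝ) (h : Fin n → Fin n → ℝ) :
    |∑ i, ∑ j, A i j * h i j| ≤ n ^ 2 * frobR A * ‖h‖ := by
  rw [← Fintype.sum_prod_type', ← Real.norm_eq_abs, mul_assoc]
  refine (norm_sum_le_of_le (f := fun p : Fin n × Fin n => A p.1 p.2 * h p.1 p.2) _
    fun p _ => ?_).trans_eq (b := ∑ _p : Fin n × Fin n, frobR A * ‖h‖) (by simp [sq])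
  rw [norm_mul]
  exact mul_le_mul (abs_apply_le_frobR A _ _)
    ((norm_le_pi_norm (h p.1) p.2).trans (norm_le_pi_norm h p.1)) (norm_nonneg _)
    (Real.sqrt_nonneg _)

theorem sum_sum_mul_eq_trace {m n : Type*} [Fintype m] [Fintype n] (A B : Matrix m n ℝ) :
    ∑ i, ∑ j, A i j * B i j = (A * Bᵀ).trace := by
  simp [trace, mul_apply]

/-- The orthogonal projection of `H` onto the tangent space of the orthogonal group at `Q`. -/
noncomputable def tangentProjection (Q H : Matrix (Fin n) (Fin n) ℝ) : Matrix (Fin n) (Fin n) ℝ :=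
  (1 / 2 : ℝ) • (H - Q * Hᵀ * Q)

/-- A polynomial map fixing the orthogonal group pointwise, whose derivative at an orthogonal `Q`
is `tangentProjection Q`; precomposing a function with it turns the Euclidean gradient at `Q` into
the projected one. -/
noncomputable def orthogonalRetraction (X : Matrix (Fin n) (Fin n) ℝ) :
    Matrix (Fin n) (Fin n) ℝ :=
  (1 / 2 : ℝ) • ((3 : ℝ) • X - X * Xᵀ * X)

variable {Q : Matrix (Fin n) (Fin n) ℝ}

theorem projGradR_eq_tangentProjection (g : Matrix (Fin n) (Fin n) ℝ → Matrix (Fin n) (Fin n) ℝ)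
    (hQ : Qᵀ * Q = 1) : projGradR g Q = tangentProjection Q (g Q) := by
  rw [projGradR, tangentProjection, mul_smul_comm, mul_sub, ← mul_assoc, mul_eq_one_comm.1 hQ,
    one_mul, transpose_mul, transpose_transpose, mul_assoc]

theorem sum_sum_mul_tangentProjection (Q G H : Matrix (Fin n) (Fin n) ℝ) :
    ∑ i, ∑ j, G i j * tangentProjection Q H i j =
      ∑ i, ∑ j, tangentProjection Q G i j * H i j := by
  have hadjoint : (G * (Q * Hᵀ * Q)ᵀ).trace = (Q * Gᵀ * Q * Hᵀ).trace := by
    rw [← trace_transpose (Q * Gᵀ * Q * Hᵀ)]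
    simp only [transpose_mul, transpose_transpose]
    rw [← mul_assoc, ← mul_assoc H, trace_mul_comm]
  simp only [sum_sum_mul_eq_trace, tangentProjection, transpose_smul, transpose_sub,
    mul_smul_comm, smul_mul_assoc, trace_smul, mul_sub, sub_mul, trace_sub, hadjoint]

theorem orthogonalRetraction_eq_self (hQ : Qᵀ * Q = 1) : orthogonalRetraction Q = Q := by
  rw [orthogonalRetraction, mul_assoc, hQ, mul_one]
  module

theorem analyticAt_orthogonalRetraction (x : Fin n → Fin n → ℝ) :
    AnalyticAt ℝ (fun x : Fin n → Fin n → ℝ => of.symm (orthogonalRetraction (of x))) x := by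
  have hentry (i j : Fin n) : AnalyticAt ℝ (fun x : Fin n → Fin n → ℝ => x i j) x :=
    ((ContinuousLinearMap.proj (R := ℝ) (φ := fun _ : Fin n => ℝ) j).comp
      (ContinuousLinearMap.proj (R := ℝ) (φ := fun _ : Fin n => Fin n → ℝ) i)).analyticAt x
  refine AnalyticAt.pi fun i => AnalyticAt.pi fun j => ?_
  simp only [orthogonalRetraction, of_symm_apply, Matrix.smul_apply, Matrix.sub_apply,
    mul_apply, transpose_apply, of_apply, smul_eq_mul]
  exact analyticAt_const.fun_mul <| (analyticAt_const.fun_mul (hentry i j)).fun_sub <|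
    Finset.analyticAt_fun_sum _ fun k _ => (Finset.analyticAt_fun_sum _ fun l _ =>
      (hentry i l).fun_mul (hentry k l)).fun_mul (hentry k j)

theorem exists_orthogonalRetraction_add_smul (hQ : Qᵀ * Q = 1) (H : Matrix (Fin n) (Fin n) ℝ) :
    ∃ R S : Matrix (Fin n) (Fin n) ℝ, ∀ t : ℝ,
      orthogonalRetraction (Q + t • H) =
        Q + t • tangentProjection Q H + t ^ 2 • R + t ^ 3 • S := by
  refine ⟨-(1 / 2 : ℝ) • (H * Hᵀ * Q + H * Qᵀ * H + Q * Hᵀ * H), -(1 / 2 : ℝ) • (H * Hᵀ * H),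
    fun t => ?_⟩
  have hHQ : H * Qᵀ * Q = H := by rw [mul_assoc, hQ, mul_one]
  have hQQ (X : Matrix (Fin n) (Fin n) ℝ) : Q * Qᵀ * X = X := by
    rw [mul_eq_one_comm.1 hQ, one_mul]
  simp only [orthogonalRetraction, tangentProjection, transpose_add, transpose_smul, add_mul,
    mul_add, smul_mul_assoc, mul_smul_comm, hHQ, hQQ]
  module

theorem hasLineDerivAt_orthogonalRetraction (hQ : Qᵀ * Q = 1) (H : Matrix (Fin n) (Fin n) ℝ) :
    HasLineDerivAt ℝ (fun x : Fin n → Fin n → ℝ => of.symm (orthogonalRetraction (of x)))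
      (of.symm (tangentProjection Q H)) (of.symm Q) (of.symm H) := by
  obtain ⟨R, S, hRS⟩ := exists_orthogonalRetraction_add_smul hQ H
  have hcurve (A B C D : Fin n → Fin n → ℝ) :
      HasDerivAt (fun t : ℝ => A + t • B + t ^ 2 • C + t ^ 3 • D) B 0 := by
    simpa using ((((hasDerivAt_id (0 : ℝ)).smul_const B).const_add A).fun_add
      (((hasDerivAt_id (0 : ℝ)).fun_pow 2).smul_const C)).fun_add
      (((hasDerivAt_id (0 : ℝ)).fun_pow 3).smul_const D)
  exact (hcurve (of.symm Q) (of.symm (tangentProjection Q H)) (of.symm R)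
    (of.symm S)).congr_of_eventuallyEq (.of_forall fun t => congrArg of.symm (hRS t))

variable {f : Matrix (Fin n) (Fin n) ℝ → ℝ}
  {g : Matrix (Fin n) (Fin n) ℝ → Matrix (Fin n) (Fin n) ℝ}

theorem fderiv_apply_of_isGradR (hg : IsGradR f g) {x : Fin n → Fin n → ℝ}
    (hf : DifferentiableAt ℝ (fun x : Fin n → Fin n → ℝ => f (of x)) x) (h : Fin n → Fin n → ℝ) :
    fderiv ℝ (fun x : Fin n → Fin n → ℝ => f (of x)) x h = ∑ i, ∑ j, g (of x) i j * h i j :=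
  (hf.hasFDerivAt.hasLineDerivAt h).unique (hg (of x) (of h))

theorem fderiv_comp_orthogonalRetraction_apply (hg : IsGradR f g)
    (hf : DifferentiableAt ℝ (fun x : Fin n → Fin n → ℝ => f (of x)) (of.symm Q))
    (hQ : Qᵀ * Q = 1) (h : Fin n → Fin n → ℝ) :
    fderiv ℝ (fun x : Fin n → Fin n → ℝ => f (orthogonalRetraction (of x))) (of.symm Q) h =
      ∑ i, ∑ j, projGradR g Q i j * h i j := by
  set ρ : (Fin n → Fin n → ℝ) → Fin n → Fin n → ℝ :=
    fun x => of.symm (orthogonalRetraction (of x))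
  have hρQ : ρ (of.symm Q) = of.symm Q := congrArg of.symm (orthogonalRetraction_eq_self hQ)
  have hρ : DifferentiableAt ℝ ρ (of.symm Q) :=
    (analyticAt_orthogonalRetraction (of.symm Q)).differentiableAt
  have hρ' : fderiv ℝ ρ (of.symm Q) h = of.symm (tangentProjection Q (of h)) :=
    (hρ.hasFDerivAt.hasLineDerivAt h).unique (hasLineDerivAt_orthogonalRetraction hQ (of h))
  have hfρ : DifferentiableAt ℝ (fun x : Fin n → Fin n → ℝ => f (of x)) (ρ (of.symm Q)) := by
    rwa [hρQ]
  refine (congrArg (· h) (fderiv_comp (of.symm Q) hfρ hρ)).trans ?_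
  rw [ContinuousLinearMap.comp_apply, hρ', hρQ, fderiv_apply_of_isGradR hg hf,
    projGradR_eq_tangentProjection g hQ]
  exact sum_sum_mul_tangentProjection Q (g Q) (of h)

theorem norm_fderiv_comp_orthogonalRetraction_le (hg : IsGradR f g)
    (hf : DifferentiableAt ℝ (fun x : Fin n → Fin n → ℝ => f (of x)) (of.symm Q))
    (hQ : Qᵀ * Q = 1) :
    ‖fderiv ℝ (fun x : Fin n → Fin n → ℝ => f (orthogonalRetraction (of x))) (of.symm Q)‖ ≤
      n ^ 2 * frobR (projGradR g Q) := by
  have hfrob : 0 ≤ frobR (projGradR g Q) := Real.sqrt_nonneg _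
  refine ContinuousLinearMap.opNorm_le_bound _ (by positivity) fun h => ?_
  rw [fderiv_comp_orthogonalRetraction_apply hg hf hQ, Real.norm_eq_abs]
  exact abs_sum_sum_mul_le _ h

end Orthogonal

end Lojasiewicz

open Lojasiewicz in
theorem lojasiewicz_projGrad_orthogonal_general {n : ℕ}
    (f : Matrix (Fin n) (Fin n) ℝ → ℝ)
    (g : Matrix (Fin n) (Fin n) ℝ → Matrix (Fin n) (Fin n) ℝ)
    (Q : Matrix (Fin n) (Fin n) ℝ)
    (hf : AnalyticAt ℝ (fun x : Fin n → Fin n → ℝ => f (Matrix.of x)) (Matrix.of.symm Q))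
    (hg : IsGradR f g) (hQ : Qᵀ * Q = 1) :
    ∃ δ > (0 : ℝ), ∃ σ > (0 : ℝ), ∃ ζ : ℝ, ζ ∈ Set.Ioc (0 : ℝ) (1 / 2) ∧
      ∀ Q' : Matrix (Fin n) (Fin n) ℝ, Q'ᵀ * Q' = 1 → frobR (Q' - Q) < δ →
        |f Q' - f Q| ^ (1 - ζ) ≤ σ * frobR (projGradR g Q') := by
  have hF : AnalyticAt ℝ (fun x : Fin n → Fin n → ℝ => f (orthogonalRetraction (of x)))
      (of.symm Q) :=
    hf.comp_of_eq (analyticAt_orthogonalRetraction _)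
      (congrArg of.symm (orthogonalRetraction_eq_self hQ))
  obtain ⟨ζ, hζ, C, hC, hgrad⟩ := exists_eventually_abs_sub_rpow_le_norm_fderiv hF
  obtain ⟨δ, hδ, hball⟩ := Metric.eventually_nhds_iff.1 (hgrad.and hf.eventually_analyticAt)
  refine ⟨δ, hδ, C * (n ^ 2 + 1), by positivity, ζ, hζ, fun Q' hQ' hdist => ?_⟩
  obtain ⟨hle, hf_Q'⟩ := hball ((dist_le_frobR_sub (of.symm Q') (of.symm Q)).trans_lt hdist)
  have hfrob : 0 ≤ frobR (projGradR g Q') := Real.sqrt_nonneg _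
  have hnorm := norm_fderiv_comp_orthogonalRetraction_le hg hf_Q'.differentiableAt hQ'
  rw [Equiv.apply_symm_apply, Equiv.apply_symm_apply, orthogonalRetraction_eq_self hQ,
    orthogonalRetraction_eq_self hQ'] at hle
  calc |f Q' - f Q| ^ (1 - ζ) ≤ C * (n ^ 2 * frobR (projGradR g Q')) :=
        hle.trans (mul_le_mul_of_nonneg_left hnorm hC.le)
    _ ≤ C * (n ^ 2 + 1) * frobR (projGradR g Q') := by nlinarith [mul_nonneg hC.le hfrob]

/-- Łojasiewicz inequality for the projected gradient on the orthogonal group: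
if `f` is real analytic on `ℝ^{n×n}`, then every `Q ∈ O(n)` admits `δ > 0`, `σ > 0`
and `ζ ∈ (0, 1/2]` such that `|f(Q') − f(Q)|^{1−ζ} ≤ σ ‖ProjGrad f(Q')‖`
for all orthogonal `Q'` with `‖Q' − Q‖ < δ`. -/
theorem lojasiewicz_projGrad_orthogonal {n : ℕ}
    (f : Matrix (Fin n) (Fin n) ℝ → ℝ)
    (g : Matrix (Fin n) (Fin n) ℝ → Matrix (Fin n) (Fin n) ℝ)
    (hf : AnalyticOnNhd ℝ (fun x : Fin n → Fin n → ℝ => f (Matrix.of x)) Set.univ)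
    (hg : IsGradR f g)
    (Q : Matrix (Fin n) (Fin n) ℝ) (hQ : Qᵀ * Q = 1) :
    ∃ δ > (0 : ℝ), ∃ σ > (0 : ℝ), ∃ ζ : ℝ, ζ ∈ Set.Ioc (0 : ℝ) (1 / 2) ∧
      ∀ Q' : Matrix (Fin n) (Fin n) ℝ, Q'ᵀ * Q' = 1 → frobR (Q' - Q) < δ →
        |f Q' - f Q| ^ (1 - ζ) ≤ σ * frobR (projGradR g Q') :=
  lojasiewicz_projGrad_orthogonal_general f g Q (hf _ (Set.mem_univ _)) hg hQ
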